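/- A projection p in a von Neumann algebra M is properly infinite if and only if p ≈ λp for some (equivalently, every) λ ∈ (0,1) ∪ (1,∞). -/

import Mathlib

open ContinuousLinearMap Filter Topology

universe u

noncomputable section

variable {H : Type u} [NormedAddCommGroup H] [InnerProductSpace ℂ H] [CompleteSpace H]

/-- `p` is an (orthogonal) projection belonging to the von Neumann algebra `M`. -/
def IsProjIn (M : VonNeumannAlgebra H) (p : H →L[ℂ] H) : Prop :=
  p ∈ M ∧ IsSelfAdjoint p ∧ p * p = p

/-- Murray–von Neumann equivalence of `p` and `q` relative to `M`:
there is a partial isometry `v ∈ M` with `v* v = p` and `v v* = q`. -/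
def MvNEquiv (M : VonNeumannAlgebra H) (p q : H →L[ℂ] H) : Prop :=
  ∃ v ∈ M, adjoint v * v = p ∧ v * adjoint v = q

/-- The order on projections: `p ≤ q` iff `p q = p = q p`. -/
def ProjLE (p q : H →L[ℂ] H) : Prop := p * q = p ∧ q * p = p

/-- Murray–von Neumann subequivalence `p ≼ q`: `p` is equivalent to a subprojection of `q`. -/
def SubEquiv (M : VonNeumannAlgebra H) (p q : H →L[ℂ] H) : Prop :=
  ∃ r, IsProjIn M r ∧ MvNEquiv M p r ∧ ProjLE r q

/-- `z` is a central projection of `M`. -/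
def IsCentralProj (M : VonNeumannAlgebra H) (z : H →L[ℂ] H) : Prop :=
  IsProjIn M z ∧ ∀ x ∈ M, z * x = x * z

/-- A projection `p` is finite: `p ∼ q ≤ p` implies `q = p`. -/
def FiniteProj (M : VonNeumannAlgebra H) (p : H →L[ℂ] H) : Prop :=
  ∀ q, IsProjIn M q → ProjLE q p → MvNEquiv M p q → q = p

/-- A projection `p` is properly infinite: it is a countably infinite sum of pairwise
orthogonal projections, each equivalent to `p`. -/
def ProperlyInfiniteProj (M : VonNeumannAlgebra H) (p : H →L[ℂ] H) : Prop :=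
  p ≠ 0 ∧ ∃ e : ℕ → H →L[ℂ] H, (∀ n, IsProjIn M (e n)) ∧
    (Pairwise fun m n => e m * e n = 0) ∧ (∀ n, MvNEquiv M (e n) p) ∧
    ∀ ξ : H, HasSum (fun n => e n ξ) (p ξ)

/-- `z` is the central support of `h`: the smallest central projection with `z h = h`. -/
def IsCentralSupport (M : VonNeumannAlgebra H) (h z : H →L[ℂ] H) : Prop :=
  IsCentralProj M z ∧ z * h = h ∧ ∀ w, IsCentralProj M w → w * h = h → z * w = z

/-- The projection `e` is σ-finite relative to `M`: every family of pairwise orthogonal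
nonzero subprojections of `e` in `M` is countable. -/
def SigmaFiniteProj (M : VonNeumannAlgebra H) (e : H →L[ℂ] H) : Prop :=
  ∀ S : Set (H →L[ℂ] H), (∀ q ∈ S, IsProjIn M q ∧ q ≠ 0 ∧ ProjLE q e) →
    (S.Pairwise fun a b => a * b = 0) → S.Countable

/-- Kadison–Pedersen equivalence on the positive cone: `h ≈ k` iff there is a family
`{x_α} ⊆ M` with `h = Σ x_α* x_α` and `k = Σ x_α x_α*` (sums in the strong topology). -/
def KPEquiv (M : VonNeumannAlgebra H) (h k : H →L[ℂ] H) : Prop :=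
  ∃ (ι : Type u) (x : ι → H →L[ℂ] H), (∀ i, x i ∈ M) ∧
    (∀ ξ : H, HasSum (fun i => (adjoint (x i) * x i) ξ) (h ξ)) ∧
    (∀ ξ : H, HasSum (fun i => (x i * adjoint (x i)) ξ) (k ξ))

/-- Operator order: `a ≤ b` iff `b - a` is positive. -/
def OpLE (a b : H →L[ℂ] H) : Prop := (b - a).IsPositive

/-- `h ∈ M₊` is finite in the Kadison–Pedersen sense: `h ≈ k ≤ h` implies `k = h`. -/
def KPFinite (M : VonNeumannAlgebra H) (h : H →L[ℂ] H) : Prop :=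
  ∀ k, k ∈ M → k.IsPositive → OpLE k h → KPEquiv M h k → k = h

/-- `h ∈ M₊` is properly infinite: `z h` is finite and nonzero for no central projection `z`. -/
def KPProperlyInfinite (M : VonNeumannAlgebra H) (h : H →L[ℂ] H) : Prop :=
  h ≠ 0 ∧ ∀ z, IsCentralProj M z → KPFinite M (z * h) → z * h = 0

/-- The set of projections of `M`. -/
def ProjSet (M : VonNeumannAlgebra H) := {p : H →L[ℂ] H // IsProjIn M p}

/-- The strong operator topology on the projections of `M` (topology of pointwise convergence). -/
instance (M : VonNeumannAlgebra H) : TopologicalSpace (ProjSet M) :=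
  TopologicalSpace.induced (fun p : ProjSet M => (fun ξ => p.1 ξ : H → H)) inferInstance

/-- The quotient `P(M)/∼` of the projections of `M` by Murray–von Neumann equivalence,
carrying the quotient (strong operator) topology. -/
abbrev PQuot (M : VonNeumannAlgebra H) :=
  Quot (fun p q : ProjSet M => MvNEquiv M p.1 q.1)

/-- The quotient map `P(M) → P(M)/∼`. -/
def pquotMk (M : VonNeumannAlgebra H) : ProjSet M → PQuot M := Quot.mk _

/-- The strong operator topology on `B(H)`. -/
def SOT : TopologicalSpace (H →L[ℂ] H) :=
  TopologicalSpace.induced (fun a : H →L[ℂ] H => (fun ξ => a ξ : H → H)) inferInstance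

/-- The order induced on `P(M)/∼` by Murray–von Neumann subequivalence. -/
def QLE (M : VonNeumannAlgebra H) (a b : PQuot M) : Prop :=
  ∃ p q : ProjSet M, a = pquotMk M p ∧ b = pquotMk M q ∧ SubEquiv M p.1 q.1


theorem vn_mem {M : VonNeumannAlgebra H} {x : H →L[ℂ] H}
    (h : ∀ t ∈ M.commutant, t * x = x * t) : x ∈ M := by
  rw [← M.commutant_commutant, VonNeumannAlgebra.mem_commutant_iff]; exact h

theorem vn_comm {M : VonNeumannAlgebra H} {x t : H →L[ℂ] H} (hx : x ∈ M)
    (ht : t ∈ M.commutant) : t * x = x * t :=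
  ((VonNeumannAlgebra.mem_commutant_iff.1 ht) x hx).symm

theorem vn_smul_mem {M : VonNeumannAlgebra H} {x : H →L[ℂ] H} (c : ℂ) (hx : x ∈ M) :
    c • x ∈ M := by
  apply vn_mem
  intro t ht
  rw [mul_smul_comm, smul_mul_assoc, vn_comm hx ht]

theorem clos_inv (K : Submodule ℂ H) (t : H →L[ℂ] H) (h : ∀ x ∈ K, t x ∈ K) :
    ∀ x ∈ K.topologicalClosure, t x ∈ K.topologicalClosure := by
  intro x hx
  exact map_mem_closure t.continuous hx h

theorem vn_proj_mem (M : VonNeumannAlgebra H) (K : Submodule ℂ H) [K.HasOrthogonalProjection]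
    (h : ∀ t ∈ M.commutant, ∀ x ∈ K, t x ∈ K) : K.starProjection ∈ M := by
  rw [VonNeumannAlgebra.IsStarProjection.mem_iff isStarProjection_starProjection]
  intro t ht
  simpa [Module.End.mem_invtSubmodule, Submodule.range_starProjection, SetLike.le_def] using h t ht

theorem proj_exists (M : VonNeumannAlgebra H) (K : Submodule ℂ H)
    (h : ∀ t ∈ M.commutant, ∀ x ∈ K, t x ∈ K) :
    ∃ e : H →L[ℂ] H, IsProjIn M e ∧ (∀ x ∈ K, e x = x) ∧
      (∀ y : H →L[ℂ] H, (∀ x ∈ K, y x = 0) → y * e = 0) ∧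
      ((∀ t ∈ M, ∀ x ∈ K, t x ∈ K) → ∀ x ∈ M, e * x = x * e) := by
  refine ⟨K.topologicalClosure.starProjection, ⟨?_, ?_, ?_⟩, ?_, ?_, ?_⟩
  · exact vn_proj_mem M _ fun t ht => clos_inv K t (h t ht)
  · exact isSelfAdjoint_starProjection _
  · exact isStarProjection_starProjection.isIdempotentElem
  · intro x hx
    exact Submodule.starProjection_eq_self_iff.2 (K.le_topologicalClosure hx)
  · intro y hy
    ext ξ
    have h1 : K.topologicalClosure.starProjection ξ ∈ K.topologicalClosure :=
      Submodule.starProjection_apply_mem _ _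
    have h2 : K.topologicalClosure ≤ LinearMap.ker (y : H →ₗ[ℂ] H) :=
      Submodule.topologicalClosure_minimal _ (fun x hx => by simpa using hy x hx) y.isClosed_ker
    simpa using h2 h1
  · intro h' x hx
    have : K.topologicalClosure.starProjection ∈ M.commutant := by
      apply vn_proj_mem
      rw [M.commutant_commutant]
      exact fun t ht => clos_inv K t (h' t ht)
    exact vn_comm hx this

theorem nsq (x : H →L[ℂ] H) (ξ : H) : ‖x ξ‖ ^ 2 = RCLike.re (inner ℂ ((star x * x) ξ) ξ) := by
  rw [ContinuousLinearMap.star_eq_adjoint]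
  exact ContinuousLinearMap.apply_norm_sq_eq_inner_adjoint_left x ξ

theorem star_mul_self_zero {x : H →L[ℂ] H} (h : star x * x = 0) : x = 0 :=
  CStarRing.star_mul_self_eq_zero_iff x |>.1 h

theorem polar (M : VonNeumannAlgebra H) (y : H →L[ℂ] H) (hy : y ∈ M) :
    ∃ v ∈ M, v * star v * v = v ∧ (∀ a, y * a = 0 → v * a = 0) ∧ (∀ a, a * y = 0 → a * v = 0) ∧
      star v * v * star y = star y ∧ y * star y = v * (star y * y) * star v := by
  obtain ⟨T, hTsa, hTT, hTc⟩ : ∃ T : H →L[ℂ] H, star T = T ∧ T * T = star y * y ∧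
      ∀ t ∈ M.commutant, t * T = T * t := by
    refine ⟨CFC.abs y, ?_, CFC.abs_mul_abs y, ?_⟩
    · exact (CFC.abs_nonneg y).isSelfAdjoint
    · intro t ht
      apply Commute.cfcAbs_right
      · exact (vn_comm hy ht).symm
      · exact (vn_comm hy (star_mem ht)).symm
  have hTM : T ∈ M := vn_mem hTc
  have hn : ∀ ξ, ‖y ξ‖ = ‖T ξ‖ := by
    intro ξ
    have : ‖y ξ‖ ^ 2 = ‖T ξ‖ ^ 2 := by rw [nsq, nsq, hTsa, hTT]
    exact (sq_eq_sq₀ (norm_nonneg _) (norm_nonneg _)).1 this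
  set K : Submodule ℂ H := (LinearMap.range (T : H →ₗ[ℂ] H)).topologicalClosure with hK
  obtain ⟨E, hE, hE1, hE2, -⟩ := proj_exists M (LinearMap.range (T : H →ₗ[ℂ] H)) (by
    rintro t ht _ ⟨x, rfl⟩
    exact ⟨t x, by simpa using (congrArg (fun f => f x) (hTc t ht)).symm⟩)
  have hET : E * T = T := by
    ext x; exact hE1 _ ⟨x, rfl⟩
  have hEz : ∀ a, a * T = 0 → a * E = 0 := by
    intro a ha
    apply hE2
    rintro _ ⟨x, rfl⟩
    simpa using congrArg (fun f => f x) ha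
  let e0 : H →ₗ[ℂ] K := (T : H →ₗ[ℂ] H).codRestrict K
    (fun x => Submodule.le_topologicalClosure _ ⟨x, rfl⟩)
  have hd : DenseRange e0 := by
    intro ⟨x, hx⟩
    rw [closure_subtype]
    have : (Subtype.val '' Set.range e0) = Set.range T := by
      ext z; constructor
      · rintro ⟨_, ⟨w, rfl⟩, rfl⟩; exact ⟨w, rfl⟩
      · rintro ⟨w, rfl⟩; exact ⟨e0 w, ⟨w, rfl⟩, rfl⟩
    rw [this]
    exact hx
  let v0 : K →L[ℂ] H := (y : H →ₗ[ℂ] H).extendOfNorm e0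
  have hv0 : ∀ ξ, v0 (e0 ξ) = y ξ := fun ξ =>
    LinearMap.extendOfNorm_eq hd ⟨1, fun x => by
      rw [one_mul]; exact (hn x).le⟩ ξ
  obtain ⟨v1, hv1⟩ : ∃ v1 : H →L[ℂ] H, v1 * T = y := by
    refine ⟨v0 ∘L K.orthogonalProjectionOnto, ?_⟩
    ext ξ
    have : K.orthogonalProjectionOnto (T ξ) = e0 ξ := 
      Submodule.orthogonalProjectionOnto_mem_subspace_eq_self (e0 ξ)
    simp [this, hv0]
  have hEs : star E = E := hE.2.1
  have hTE : T * E = T := by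
    have := congrArg star hET
    simpa [hTsa, hEs] using this
  have hvT : (v1 * E) * T = y := by rw [mul_assoc, hET, hv1]
  have hvE : (v1 * E) * E = v1 * E := by rw [mul_assoc, hE.2.2]
  generalize v1 * E = v at hvT hvE
  have hEv : E * star v = star v := by
    have := congrArg star hvE
    simpa [hEs] using this
  have hD : star v * v = E := by
    have h1 : T * (star v * v - E) * T = 0 := by
      have : T * star v = star y := by rw [← hvT]; simp [hTsa]
      rw [mul_sub, sub_mul, ← mul_assoc, this, mul_assoc, hvT, hTE, hTT, sub_self]
    have h2 : T * (star v * v - E) * E = 0 := hEz _ h1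
    have h3 : star (T * (star v * v - E) * E) = 0 := by rw [h2, star_zero]
    simp only [star_mul, star_sub, star_star, hEs, hTsa] at h3
    have h4 := hEz (E * (star v * v - E)) (by rw [mul_assoc]; exact h3)
    rw [mul_sub, sub_mul, mul_assoc E, mul_assoc (star v), hvE, ← mul_assoc, hEv, hE.2.2, hE.2.2] at h4
    exact sub_eq_zero.1 h4
  have hvv : v * star v * v = v := by rw [mul_assoc, hD, hvE]
  have hTsv : T * star v = star y := by rw [← hvT]; simp [hTsa]
  have hy2 : star v * y = T := by rw [← hvT, ← mul_assoc, hD, hET]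
  refine ⟨v, ?_, hvv, ?_, ?_, ?_, ?_⟩
  · apply vn_mem
    intro t ht
    have := hEz (t * v - v * t) (by
      rw [sub_mul, mul_assoc, hvT, mul_assoc, hTc t ht, ← mul_assoc, hvT, vn_comm hy ht, sub_self])
    rw [sub_mul, mul_assoc, hvE, mul_assoc, vn_comm hE.1 ht, ← mul_assoc, hvE] at this
    exact sub_eq_zero.1 this
  · intro a ha
    have h1 : star a * T = 0 := by
      have : T * a = 0 := by rw [← hy2, mul_assoc, ha, mul_zero]
      have := congrArg star this
      simpa [hTsa] using this
    have h2 : E * a = 0 := by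
      have := congrArg star (hEz _ h1)
      simpa [hEs] using this
    rw [← hvE, mul_assoc, h2, mul_zero]
  · intro a ha
    have := hEz (a * v) (by rw [mul_assoc, hvT, ha])
    rwa [mul_assoc, hvE] at this
  · rw [hD, ← hvT]; simp [hTsa, ← mul_assoc, hET]
  · rw [← hTT, mul_assoc, mul_assoc, hTsv, ← mul_assoc, hvT]


theorem re_inner_le {a b : H →L[ℂ] H} (h : a ≤ b) (η : H) :
    RCLike.re (inner ℂ (a η) η) ≤ RCLike.re (inner ℂ (b η) η) := by
  have := ((ContinuousLinearMap.le_def a b).1 h).re_inner_nonneg_left η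
  rw [_root_.sub_apply, inner_sub_left, map_sub] at this
  linarith

theorem re_conj (a e : H →L[ℂ] H) (he : star e = e) (η : H) :
    RCLike.re (inner ℂ ((e * a * e) η) η) = RCLike.re (inner ℂ (a (e η)) (e η)) := by
  have : inner ℂ ((e * a * e) η) η = inner ℂ (a (e η)) (star e η) := by
    rw [ContinuousLinearMap.star_eq_adjoint, ContinuousLinearMap.adjoint_inner_right]; rfl
  rw [this, he]

theorem layer (M : VonNeumannAlgebra H) (h : H →L[ℂ] H) (hM : h ∈ M) (h0 : 0 ≤ h)
    (δ : ℝ) (hδ : 0 < δ) :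
    ∃ (n : ℕ) (E : ℕ → H →L[ℂ] H), (∀ k, IsProjIn M (E k)) ∧ (∀ k a, a * h = 0 → a * E k = 0) ∧
      (∀ η, RCLike.re (inner ℂ (h η) η) ≤
        δ * ‖η‖ ^ 2 + ∑ k ∈ Finset.range n, δ * ‖E (k + 1) η‖ ^ 2) ∧
      (∀ η, ∑ k ∈ Finset.range n, δ * ‖E (k + 1) η‖ ^ 2 ≤ RCLike.re (inner ℂ (h η) η)) := by
  have hsa : IsSelfAdjoint h := h0.isSelfAdjoint
  let f : ℕ → ℝ → ℝ := fun k t => max (t - k * δ) 0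
  have hfc : ∀ k, Continuous (f k) := fun k => by fun_prop
  let g : ℕ → H →L[ℂ] H := fun k => cfc (f k) h
  have hgM : ∀ k, g k ∈ M := by
    intro k
    apply vn_mem
    intro t ht
    exact ((Commute.cfc_real (show Commute h t from (vn_comm hM ht).symm) (f k)).symm : Commute t _)
  have hgsa : ∀ k, star (g k) = g k := fun k => cfc_predicate (f k) h
  have hspec : ∀ t ∈ spectrum ℝ h, 0 ≤ t := fun t ht => spectrum_nonneg_of_nonneg h0 ht
  have hg0 : g 0 = h := by
    conv_rhs => rw [← cfc_id ℝ h]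
    apply cfc_congr
    intro t ht
    simp [f, hspec t ht]
  obtain ⟨n, hn⟩ := exists_nat_gt (‖h‖ * ‖(1 : H →L[ℂ] H)‖ / δ)
  have hgn : g n = 0 := by
    rw [← cfc_zero ℝ h]
    apply cfc_congr
    intro t ht
    have h1 : t ≤ ‖h‖ * ‖(1 : H →L[ℂ] H)‖ :=
      (le_abs_self t).trans (spectrum.norm_le_norm_mul_of_mem ht)
    have h2 : ‖h‖ * ‖(1 : H →L[ℂ] H)‖ < n * δ := (div_lt_iff₀ hδ).1 hn
    simp only [f, Pi.zero_apply]
    apply max_eq_right; linarith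
  have hEx : ∀ k, ∃ e : H →L[ℂ] H, IsProjIn M e ∧ e * g k = g k ∧ ∀ a, a * g k = 0 → a * e = 0 := by
    intro k
    obtain ⟨E, hE, hE1, hE2, -⟩ := proj_exists M (LinearMap.range (g k : H →ₗ[ℂ] H)) (by
      rintro t ht _ ⟨x, rfl⟩
      exact ⟨t x, by simpa using (congrArg (fun f => f x) (vn_comm (hgM k) ht)).symm⟩)
    refine ⟨E, hE, ?_, ?_⟩
    · ext x; exact hE1 _ ⟨x, rfl⟩
    · intro a ha
      apply hE2
      rintro _ ⟨x, rfl⟩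
      simpa using congrArg (fun f => f x) ha
  choose E hE hE1 hE2 using hEx
  have hsucc : ∀ k, ∃ q : H →L[ℂ] H, g (k + 1) = g k * q := by
    intro k
    let q : ℝ → ℝ := fun t => f (k + 1) t / max (t - k * δ) δ
    have hqc : Continuous q := by
      apply (hfc _).div (by fun_prop)
      intro t
      exact (lt_of_lt_of_le hδ (le_max_right _ _)).ne'
    refine ⟨cfc q h, ?_⟩
    rw [← cfc_mul (f k) q h (hfc k).continuousOn hqc.continuousOn]
    apply cfc_congr
    intro t _
    simp only [f, q]
    push_cast
    rcases le_total (t - k * δ) δ with h1 | h1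
    · have : max (t - (k + 1) * δ) 0 = 0 := max_eq_right (by linarith)
      simp [this]
    · rw [max_eq_left h1, max_eq_left (by linarith : (0:ℝ) ≤ t - k * δ)]
      have : t - k * δ ≠ 0 := by linarith
      field_simp
  have hd : ∀ k, g k - g (k + 1) = cfc (fun t => f k t - f (k + 1) t) h := fun k =>
    (cfc_sub (f k) (f (k + 1)) h (hfc k).continuousOn (hfc (k+1)).continuousOn).symm
  have hdc : ∀ k, Continuous (fun t => f k t - f (k + 1) t) := fun k => (hfc k).sub (hfc (k + 1))
  have hfd : ∀ k t, 0 ≤ f k t - f (k + 1) t ∧ f k t - f (k + 1) t ≤ δ := by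
    intro k t
    simp only [f]; push_cast
    rcases le_total (t - k * δ) 0 with h1 | h1 <;> rcases le_total (t - (k + 1) * δ) 0 with h2 | h2 <;>
      simp only [max_eq_left, max_eq_right, h1, h2] <;> constructor <;> linarith
  have hd0 : ∀ k, 0 ≤ g k - g (k + 1) := fun k => by
    rw [hd]; exact cfc_nonneg fun t _ => (hfd k t).1
  have hd1 : ∀ k, g k - g (k + 1) ≤ algebraMap ℝ (H →L[ℂ] H) δ := fun k => by
    rw [hd]
    exact cfc_le_algebraMap _ _ _ (fun t _ => (hfd k t).2) (hdc k).continuousOn hsa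
  have hE1' : ∀ k, g k * E k = g k := by
    intro k
    have := congrArg star (hE1 k)
    simpa [hgsa, (hE k).2.1.star_eq] using this
  have hA : ∀ k, E k * (g k - g (k + 1)) * E k = g k - g (k + 1) := by
    intro k
    obtain ⟨q, hq⟩ := hsucc k
    have h1 : E k * g (k + 1) = g (k + 1) := by rw [hq, ← mul_assoc, hE1]
    have h2 : g (k + 1) * E k = g (k + 1) := by
      have := congrArg star h1
      simpa [hgsa, (hE k).2.1.star_eq] using this
    rw [mul_sub, sub_mul, hE1, h1, hE1', h2]
  have hup : ∀ k η, RCLike.re (inner ℂ ((g k - g (k + 1)) η) η) ≤ δ * ‖E k η‖ ^ 2 := by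
    intro k η
    rw [← hA k, re_conj _ _ (hE k).2.1]
    refine (re_inner_le (hd1 k) _).trans (le_of_eq ?_)
    rw [Algebra.algebraMap_eq_smul_one]
    simp [← Complex.ofReal_pow]
  have hB : ∀ k, (g k - g (k + 1)) * E (k + 1) = δ • E (k + 1) := by
    intro k
    have : (algebraMap ℝ (H →L[ℂ] H) δ - (g k - g (k + 1))) * g (k + 1) = 0 := by
      rw [hd, ← cfc_const δ h, ← cfc_sub _ _ h (by fun_prop) (hdc k).continuousOn]
      rw [← cfc_mul _ _ h (by fun_prop) (hfc (k+1)).continuousOn, ← cfc_zero ℝ h]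
      apply cfc_congr
      intro t _
      simp only [f, Pi.zero_apply]; push_cast
      rcases le_total (t - (k + 1) * δ) 0 with h2 | h2
      · simp [h2]
      · rw [max_eq_left h2, max_eq_left (by linarith)]; ring
    have := hE2 (k + 1) _ this
    rw [sub_mul, sub_eq_zero, Algebra.algebraMap_eq_smul_one, smul_mul_assoc, one_mul] at this
    exact this.symm
  have hlo : ∀ k η, δ * ‖E (k + 1) η‖ ^ 2 ≤ RCLike.re (inner ℂ ((g k - g (k + 1)) η) η) := by
    intro k η
    have hsE := (hE (k + 1)).2.1.star_eq
    have hB' : E (k + 1) * (g k - g (k + 1)) = δ • E (k + 1) := by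
      have := congrArg star (hB k)
      simpa only [star_mul, star_sub, hgsa, star_smul, hsE, star_trivial] using this
    have hid := (hE (k + 1)).2.2
    have key : g k - g (k + 1) = δ • E (k + 1) +
        (1 - E (k + 1)) * (g k - g (k + 1)) * (1 - E (k + 1)) := by
      rw [sub_mul 1, one_mul, hB', mul_sub, mul_one, sub_mul, hB, smul_mul_assoc, hid]
      abel
    have h1 : 0 ≤ RCLike.re (inner ℂ (((1 - E (k + 1)) * (g k - g (k + 1)) * (1 - E (k + 1))) η) η) := by
      rw [re_conj _ _ (by simp [hsE])]
      have := re_inner_le (hd0 k) ((1 - E (k + 1)) η)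
      simpa using this
    rw [key, _root_.add_apply, inner_add_left, map_add, nsq, hsE, hid]
    have : RCLike.re (inner ℂ ((δ • E (k + 1)) η) η) = δ * RCLike.re (inner ℂ (E (k + 1) η) η) := by
      simp
    rw [this]; linarith
  have htel : ∀ η, RCLike.re (inner ℂ (h η) η) =
      ∑ k ∈ Finset.range n, RCLike.re (inner ℂ ((g k - g (k + 1)) η) η) := by
    intro η
    have : ∀ k, RCLike.re (inner ℂ ((g k - g (k + 1)) η) η) =
      RCLike.re (inner ℂ (g k η) η) - RCLike.re (inner ℂ (g (k + 1) η) η) := by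
      intro k
      rw [_root_.sub_apply, inner_sub_left, map_sub]
    simp only [this]
    rw [Finset.sum_range_sub', hg0, hgn]; simp
  refine ⟨n, E, hE, ?_, ?_, ?_⟩
  · intro k a ha
    apply hE2
    induction k with
    | zero => rw [hg0, ha]
    | succ k ih =>
      obtain ⟨q, hq⟩ := hsucc k
      rw [hq, ← mul_assoc, ih, zero_mul]
  · intro η
    rw [htel]
    have hE0 : ‖E 0 η‖ ≤ ‖η‖ := by
      have h1 : ‖E 0‖ ≤ 1 := IsStarProjection.norm_le (E 0) ⟨(hE 0).2.2, (hE 0).2.1⟩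
      exact ((E 0).le_opNorm η).trans (by nlinarith [norm_nonneg η])
    calc _ ≤ ∑ k ∈ Finset.range n, δ * ‖E k η‖ ^ 2 := Finset.sum_le_sum fun k _ => hup k η
      _ ≤ ∑ k ∈ Finset.range (n + 1), δ * ‖E k η‖ ^ 2 := by
        rw [Finset.sum_range_succ]; have : 0 ≤ δ * ‖E n η‖ ^ 2 := by positivity
        linarith
      _ = (∑ k ∈ Finset.range n, δ * ‖E (k + 1) η‖ ^ 2) + δ * ‖E 0 η‖ ^ 2 := Finset.sum_range_succ' _ _
      _ ≤ _ := by
        have : δ * ‖E 0 η‖ ^ 2 ≤ δ * ‖η‖ ^ 2 := by gcongr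
        linarith
  · intro η
    rw [htel]
    exact Finset.sum_le_sum fun k _ => hlo k η


theorem star_inner (y : H →L[ℂ] H) (a b : H) : inner ℂ ((star y) a) b = inner ℂ a (y b) := by
  rw [ContinuousLinearMap.star_eq_adjoint, ContinuousLinearMap.adjoint_inner_left]

theorem sum_pair_bound {ι : Type*} (y x : ι → H →L[ℂ] H) (C : ℝ)
    (hy : ∀ (η : H) (F : Finset ι), ∑ i ∈ F, ‖y i η‖ ^ 2 ≤ C * ‖η‖ ^ 2) (ξ : H) (F : Finset ι) :
    ‖∑ i ∈ F, (star (y i)) (x i ξ)‖ ^ 2 ≤ C * ∑ i ∈ F, ‖x i ξ‖ ^ 2 := by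
  set S := ∑ i ∈ F, (star (y i)) (x i ξ) with hS
  have h1 : ‖S‖ ^ 2 ≤ ∑ i ∈ F, ‖x i ξ‖ * ‖y i S‖ := by
    have : ‖S‖ ^ 2 = ∑ i ∈ F, RCLike.re (inner ℂ (x i ξ) (y i S)) := by
      rw [← inner_self_eq_norm_sq (𝕜 := ℂ) S]
      conv_lhs => arg 2; rw [hS]
      rw [sum_inner, map_sum]
      exact Finset.sum_congr rfl fun i _ => by rw [star_inner]
    rw [this]
    exact Finset.sum_le_sum fun i _ => re_inner_le_norm _ _
  have h2 := Finset.sum_mul_sq_le_sq_mul_sq F (fun i => ‖x i ξ‖) (fun i => ‖y i S‖)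
  have h3 : 0 ≤ ∑ i ∈ F, ‖x i ξ‖ ^ 2 := Finset.sum_nonneg fun i _ => by positivity
  have h4 : (‖S‖ ^ 2) ^ 2 ≤ (C * ∑ i ∈ F, ‖x i ξ‖ ^ 2) * ‖S‖ ^ 2 := by
    calc (‖S‖ ^ 2) ^ 2 ≤ (∑ i ∈ F, ‖x i ξ‖ * ‖y i S‖) ^ 2 := by gcongr
      _ ≤ _ := h2
      _ ≤ (∑ i ∈ F, ‖x i ξ‖ ^ 2) * (C * ‖S‖ ^ 2) := by gcongr; exact hy S F
      _ = _ := by ring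
  rcases eq_or_ne S 0 with h | h
  · have hC : 0 ≤ C * ∑ i ∈ F, ‖x i ξ‖ ^ 2 := by
      rcases eq_or_ne ξ 0 with h' | h'
      · simp [h']
      · have := hy ξ ∅
        have h5 : 0 < ‖ξ‖ ^ 2 := by positivity
        have : 0 ≤ C := by
          simp only [Finset.sum_empty] at this
          exact nonneg_of_mul_nonneg_left this h5
        positivity
    rw [h]; simpa using hC
  · have h5 : 0 < ‖S‖ ^ 2 := by positivity
    rw [sq (‖S‖ ^ 2)] at h4
    exact le_of_mul_le_mul_right h4 h5

theorem summable_pair {ι : Type*} (y x : ι → H →L[ℂ] H) (C : ℝ)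
    (hy : ∀ (η : H) (F : Finset ι), ∑ i ∈ F, ‖y i η‖ ^ 2 ≤ C * ‖η‖ ^ 2) (ξ : H)
    (hx : Summable fun i => ‖x i ξ‖ ^ 2) : Summable fun i => (star (y i)) (x i ξ) := by
  rw [summable_iff_vanishing_norm] at hx ⊢
  intro ε hε
  obtain ⟨s, hs⟩ := hx (ε ^ 2 / (|C| + 1)) (by positivity)
  refine ⟨s, fun t ht => ?_⟩
  have h1 := hs t ht
  have h2 := sum_pair_bound y x C hy ξ t
  have h3 : 0 ≤ ∑ i ∈ t, ‖x i ξ‖ ^ 2 := Finset.sum_nonneg fun i _ => by positivity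
  rw [Real.norm_of_nonneg h3, lt_div_iff₀ (by positivity)] at h1
  have h4 : C * ∑ i ∈ t, ‖x i ξ‖ ^ 2 ≤ |C| * ∑ i ∈ t, ‖x i ξ‖ ^ 2 := by
    gcongr; exact le_abs_self C
  exact lt_of_pow_lt_pow_left₀ 2 hε.le (by nlinarith)

theorem strong_sum (M : VonNeumannAlgebra H) {ι : Type*} (x : ι → H →L[ℂ] H) (hx : ∀ i, x i ∈ M)
    (C : ℝ) (hs : ∀ ξ, Summable fun i => x i ξ)
    (hb : ∀ ξ (F : Finset ι), ‖∑ i ∈ F, x i ξ‖ ≤ C * ‖ξ‖) :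
    ∃ V ∈ M, ∀ ξ, HasSum (fun i => x i ξ) (V ξ) := by
  let L : H →ₗ[ℂ] H :=
    { toFun := fun ξ => ∑' i, x i ξ
      map_add' := fun a b => by
        simp only [map_add]; exact (hs a).tsum_add (hs b)
      map_smul' := fun c a => by
        simp only [map_smul, RingHom.id_apply]; exact (hs a).tsum_const_smul c }
  let V : H →L[ℂ] H := L.mkContinuous C (fun ξ =>
    le_of_tendsto ((hs ξ).hasSum.norm) (Eventually.of_forall fun F => hb ξ F))
  have hV : ∀ ξ, HasSum (fun i => x i ξ) (V ξ) := fun ξ => (hs ξ).hasSum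
  refine ⟨V, ?_, hV⟩
  apply vn_mem
  intro t ht
  ext ξ
  have h1 : HasSum (fun i => t (x i ξ)) (t (V ξ)) := (hV ξ).mapL t
  have h2 : HasSum (fun i => x i (t ξ)) (V (t ξ)) := hV (t ξ)
  have : (fun i => t (x i ξ)) = fun i => x i (t ξ) := by
    funext i
    exact congrArg (fun f => f ξ) (vn_comm (hx i) ht)
  rw [this] at h1
  exact h1.unique h2

def PIFam (M : VonNeumannAlgebra H) {ι : Type*} (v : ι → H →L[ℂ] H) : Prop :=
  (∀ i, v i ∈ M) ∧ (∀ i, v i * star (v i) * v i = v i) ∧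
  (∀ i j, i ≠ j → star (v i) * v j = 0) ∧ (∀ i j, i ≠ j → v i * star (v j) = 0)

theorem PIFam.star {M : VonNeumannAlgebra H} {ι : Type*} {v : ι → H →L[ℂ] H} (h : PIFam M v) :
    PIFam M (fun i => star (v i)) := by
  refine ⟨fun i => star_mem (h.1 i), fun i => ?_, fun i j hij => ?_, fun i j hij => ?_⟩
  · have := congrArg Star.star (h.2.1 i)
    simpa [mul_assoc] using this
  · simpa using h.2.2.2 i j hij
  · simpa using h.2.2.1 i j hij

theorem norm_sq_proj {e : H →L[ℂ] H} (hs : star e = e) (hi : e * e = e) (η : H) :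
    ‖e η‖ ^ 2 = RCLike.re (inner ℂ (e η) η) := by rw [nsq, hs, hi]

theorem norm_proj_le {e : H →L[ℂ] H} (hs : star e = e) (hi : e * e = e) (η : H) :
    ‖e η‖ ≤ ‖η‖ := by
  have h1 : ‖e‖ ≤ 1 := IsStarProjection.norm_le e ⟨hi, hs⟩
  exact (e.le_opNorm η).trans (by nlinarith [norm_nonneg η])

theorem PIFam.bessel {M : VonNeumannAlgebra H} {ι : Type*} {v : ι → H →L[ℂ] H} (h : PIFam M v)
    (η : H) (F : Finset ι) : ∑ i ∈ F, ‖v i η‖ ^ 2 ≤ ‖η‖ ^ 2 := by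
  classical
  set E := ∑ i ∈ F, Star.star (v i) * v i with hE
  have hs : Star.star E = E := by simp [hE, star_sum]
  have hi : E * E = E := by
    rw [hE, Finset.sum_mul_sum]
    apply Finset.sum_congr rfl
    intro i hi
    rw [Finset.sum_eq_single i]
    · rw [mul_assoc, ← mul_assoc (v i), h.2.1]
    · intro j _ hj
      rw [mul_assoc, ← mul_assoc (v i), h.2.2.2 i j hj.symm]; simp
    · exact fun h' => absurd hi h'
  have : ∑ i ∈ F, ‖v i η‖ ^ 2 = ‖E η‖ ^ 2 := by
    rw [norm_sq_proj hs hi, hE]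
    simp only [nsq, ContinuousLinearMap.sum_apply, sum_inner, map_sum]
  rw [this]
  gcongr
  exact norm_proj_le hs hi η

theorem PIFam.sum_aux {M : VonNeumannAlgebra H} {ι : Type*} {v : ι → H →L[ℂ] H} (h : PIFam M v) :
    ∃ V ∈ M, ∀ ξ, HasSum (fun i => v i ξ) (V ξ) := by
  have hb1 : ∀ (η : H) (F : Finset ι), ∑ i ∈ F, ‖(v i * Star.star (v i)) η‖ ^ 2 ≤ 1 * ‖η‖ ^ 2 := by
    intro η F
    refine le_trans (le_of_eq ?_) ((h.star.bessel η F).trans (by simp))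
    apply Finset.sum_congr rfl
    intro i _
    rw [nsq, nsq]
    congr 3
    have := h.2.1 i
    simp only [star_mul, star_star]
    rw [← mul_assoc, this]
  have hst : ∀ ξ i, (Star.star (v i * Star.star (v i))) (v i ξ) = v i ξ := by
    intro ξ i
    have := congrArg (fun f => f ξ) (h.2.1 i)
    simpa using this
  apply strong_sum M v h.1 1
  · intro ξ
    have := summable_pair (fun i => v i * Star.star (v i)) v 1 hb1 ξ
      (summable_of_sum_le (fun i => by positivity) (fun F => h.bessel ξ F))
    simpa only [hst] using this
  · intro ξ F
    have := sum_pair_bound (fun i => v i * Star.star (v i)) v 1 hb1 ξ F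
    simp only [hst, one_mul] at this
    rw [one_mul]
    exact (pow_le_pow_iff_left₀ (norm_nonneg _) (norm_nonneg _) two_ne_zero).1 (this.trans (h.bessel ξ F))

structure IsPISum (M : VonNeumannAlgebra H) {ι : Type*} (v : ι → H →L[ℂ] H) (V : H →L[ℂ] H) : Prop where
  mem : V ∈ M
  pi : V * star V * V = V
  hs : ∀ ξ, HasSum (fun i => v i ξ) (V ξ)
  hs' : ∀ ξ, HasSum (fun i => (star (v i)) ξ) ((star V) ξ)
  hr : ∀ i, V * star (v i) * v i = v i
  hl : ∀ i, v i * star (v i) * V = v i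
  hss : ∀ ξ, HasSum (fun i => (star (v i) * v i) ξ) ((star V * V) ξ)
  hss' : ∀ ξ, HasSum (fun i => (v i * star (v i)) ξ) ((V * star V) ξ)
  hn : ∀ ξ, HasSum (fun i => ‖v i ξ‖ ^ 2) (‖V ξ‖ ^ 2)
  hn' : ∀ ξ, HasSum (fun i => ‖(star (v i)) ξ‖ ^ 2) (‖(star V) ξ‖ ^ 2)

theorem hasSum_mul_left {ι : Type*} {v : ι → H →L[ℂ] H} {V : H →L[ℂ] H}
    (h : ∀ ξ, HasSum (fun i => v i ξ) (V ξ)) (a : H →L[ℂ] H) :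
    ∀ ξ, HasSum (fun i => (a * v i) ξ) ((a * V) ξ) := fun ξ => (h ξ).mapL a

theorem hasSum_mul_right {ι : Type*} {v : ι → H →L[ℂ] H} {V : H →L[ℂ] H}
    (h : ∀ ξ, HasSum (fun i => v i ξ) (V ξ)) (a : H →L[ℂ] H) :
    ∀ ξ, HasSum (fun i => (v i * a) ξ) ((V * a) ξ) := fun ξ => h (a ξ)

theorem hasSum_uniq {ι : Type*} {v : ι → H →L[ℂ] H} {V W : H →L[ℂ] H}
    (h : ∀ ξ, HasSum (fun i => v i ξ) (V ξ)) (h' : ∀ ξ, HasSum (fun i => v i ξ) (W ξ)) : V = W := by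
  ext ξ; exact (h ξ).unique (h' ξ)

theorem hasSum_op_single {ι : Type*} {v : ι → H →L[ℂ] H} {V : H →L[ℂ] H}
    (h : ∀ ξ, HasSum (fun i => v i ξ) (V ξ)) (i : ι) (hi : ∀ j, j ≠ i → v j = 0) : V = v i := by
  refine hasSum_uniq h fun ξ => ?_
  exact hasSum_single i fun j hj => by rw [hi j hj]; rfl

theorem hasSum_nsq {ι : Type*} {v : ι → H →L[ℂ] H} {V : H →L[ℂ] H}
    (h : ∀ ξ, HasSum (fun i => (star (v i) * v i) ξ) ((star V * V) ξ)) (ξ : H) :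
    HasSum (fun i => ‖v i ξ‖ ^ 2) (‖V ξ‖ ^ 2) := by
  simp only [nsq]
  have h1 := (h ξ).mapL (innerSL ℂ ξ)
  have h2 := RCLike.hasSum_re ℂ h1
  simp only [innerSL_apply_apply] at h2
  simpa only [inner_re_symm ξ] using h2

theorem hasSum_star {ι : Type*} {v : ι → H →L[ℂ] H} {V V' : H →L[ℂ] H}
    (h : ∀ ξ, HasSum (fun i => v i ξ) (V ξ)) (h' : ∀ ξ, HasSum (fun i => (star (v i)) ξ) (V' ξ)) :
    V' = star V := by
  ext a
  apply ext_inner_left ℂ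
  intro b
  have h1 := (h' a).mapL (innerSL ℂ b)
  have h2 := ((h b).mapL (innerSL ℂ a)).star
  simp only [innerSL_apply_apply, RCLike.star_def, inner_conj_symm] at h1 h2
  have h3 : inner ℂ b ((star V) a) = inner ℂ (V b) a := by
    rw [← star_inner, star_star]
  have h4 : ∀ i, inner ℂ b ((star (v i)) a) = inner ℂ (v i b) a := by
    intro i
    rw [← star_inner, star_star]
  simp only [h4] at h1
  rw [h3]
  exact h1.unique h2

theorem PIFam.sum {M : VonNeumannAlgebra H} {ι : Type*} {v : ι → H →L[ℂ] H} (h : PIFam M v) :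
    ∃ V, IsPISum M v V := by
  obtain ⟨V, hV, hs⟩ := h.sum_aux
  obtain ⟨V', hV', hs'⟩ := h.star.sum_aux
  obtain rfl := hasSum_star hs hs'
  have hpi : ∀ i, Star.star (v i) * v i * Star.star (v i) = Star.star (v i) := by
    intro i
    simpa using h.star.2.1 i
  have hr : ∀ i, V * Star.star (v i) * v i = v i := by
    intro i
    have h1 := hasSum_op_single (hasSum_mul_right hs (Star.star (v i) * v i)) i (by
      intro j hj; rw [← mul_assoc, h.2.2.2 j i hj, zero_mul])
    rw [mul_assoc, h1, ← mul_assoc, h.2.1]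
  have hl : ∀ i, v i * Star.star (v i) * V = v i := by
    intro i
    have h1 := hasSum_op_single (hasSum_mul_left hs (v i * Star.star (v i))) i (by
      intro j hj; rw [mul_assoc, h.2.2.1 i j hj.symm, mul_zero])
    rw [h1, h.2.1]
  have hss : ∀ ξ, HasSum (fun i => (Star.star (v i) * v i) ξ) ((Star.star V * V) ξ) := by
    intro ξ
    have := hasSum_mul_right hs' V ξ
    have e : ∀ i, Star.star (v i) * V = Star.star (v i) * v i := by
      intro i
      have h1 := congrArg (fun z => Star.star (v i) * z) (hl i)
      simp only [← mul_assoc] at h1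
      rwa [hpi i] at h1
    simpa only [e] using this
  have hss' : ∀ ξ, HasSum (fun i => (v i * Star.star (v i)) ξ) ((V * Star.star V) ξ) := by
    intro ξ
    have := hasSum_mul_left hs' V ξ
    have e : ∀ i, V * Star.star (v i) = v i * Star.star (v i) := by
      intro i
      have h1 := congrArg (fun z => z * Star.star (v i)) (hr i)
      simp only [mul_assoc] at h1
      rwa [← mul_assoc (Star.star (v i)), hpi i] at h1
    simpa only [e] using this
  refine ⟨V, hV, ?_, hs, hs', hr, hl, hss, hss', hasSum_nsq hss, ?_⟩
  · have e1 := hasSum_mul_right hss' V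
    simp only [hl] at e1
    exact hasSum_uniq e1 hs
  · apply hasSum_nsq
    simpa using hss'

theorem norm_le_iff_test {a b : H →L[ℂ] H} (h : star a * a = star b * b) (ξ : H) : ‖a ξ‖ = ‖b ξ‖ := by
  have : ‖a ξ‖ ^ 2 = ‖b ξ‖ ^ 2 := by rw [nsq, nsq, h]
  exact (sq_eq_sq₀ (norm_nonneg _) (norm_nonneg _)).1 this


theorem pi_zorn (M : VonNeumannAlgebra H) (Q : (H →L[ℂ] H) → Prop) (e f : H →L[ℂ] H) :
    ∃ (S : Set (H →L[ℂ] H)) (V : H →L[ℂ] H), PIFam M (fun v : S => (v : H →L[ℂ] H)) ∧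
      (∀ v ∈ S, Q v ∧ v * e = v ∧ f * v = v) ∧ IsPISum M (fun v : S => (v : H →L[ℂ] H)) V ∧
      ∀ u ∈ M, u * star u * u = u → Q u → u * e = u → f * u = u → u * star V = 0 → star u * V = 0 →
        u = 0 := by
  let G : Set (Set (H →L[ℂ] H)) := {S | (∀ v ∈ S, v ∈ M ∧ v * star v * v = v ∧ Q v ∧ v * e = v ∧ f * v = v) ∧
    ∀ v ∈ S, ∀ w ∈ S, v ≠ w → star v * w = 0 ∧ v * star w = 0}
  obtain ⟨S, hS⟩ := zorn_subset G (by
    intro c hc hch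
    refine ⟨⋃₀ c, ⟨?_, ?_⟩, fun s hs => Set.subset_sUnion_of_mem hs⟩
    · rintro v ⟨s, hs, hv⟩
      exact (hc hs).1 v hv
    · rintro v ⟨s, hs, hv⟩ w ⟨t, ht, hw⟩ hne
      rcases hch.total hs ht with h | h
      · exact (hc ht).2 v (h hv) w hw hne
      · exact (hc hs).2 v hv w (h hw) hne)
  have hG := hS.prop
  have hF : PIFam M (fun v : S => (v : H →L[ℂ] H)) := by
    refine ⟨fun v => (hG.1 v v.2).1, fun v => (hG.1 v v.2).2.1, fun v w h => ?_, fun v w h => ?_⟩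
    · exact (hG.2 v v.2 w w.2 (fun h' => h (Subtype.ext h'))).1
    · exact (hG.2 v v.2 w w.2 (fun h' => h (Subtype.ext h'))).2
  obtain ⟨V, hV⟩ := hF.sum
  refine ⟨S, V, hF, fun v hv => (hG.1 v hv).2.2, hV, ?_⟩
  intro u hu hpi hQ hue hfu h1 h2
  have hmem : u ∈ S := by
    have h3 : ∀ v ∈ S, u * star v = 0 := by
      intro v hv
      have := congrArg star (hV.hl ⟨v, hv⟩)
      simp only [star_mul, star_star] at this
      rw [← this, ← mul_assoc, h1, zero_mul]
    have h4 : ∀ v ∈ S, star u * v = 0 := by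
      intro v hv
      have := hV.hr ⟨v, hv⟩
      simp only at this
      rw [← this, mul_assoc, ← mul_assoc, h2, zero_mul]
    have : insert u S ∈ G := by
      refine ⟨?_, ?_⟩
      · rintro v (rfl | hv)
        · exact ⟨hu, hpi, hQ, hue, hfu⟩
        · exact hG.1 v hv
      · rintro v (rfl | hv) w (rfl | hw) hne
        · exact absurd rfl hne
        · exact ⟨h4 w hw, h3 w hw⟩
        · have a1 := congrArg star (h4 v hv)
          have a2 := congrArg star (h3 v hv)
          simp only [star_mul, star_star, star_zero] at a1 a2
          exact ⟨a1, a2⟩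
        · exact hG.2 v hv w hw hne
    exact hS.le_of_ge this (Set.subset_insert u S) (Set.mem_insert u S)
  have := hV.hl ⟨u, hmem⟩
  simp only at this
  rw [← this, mul_assoc, h2, mul_zero]

theorem csupp (M : VonNeumannAlgebra H) (r : H →L[ℂ] H) (hr : r ∈ M) :
    ∃ z, IsCentralProj M z ∧ z * r = r ∧ ∀ e : H →L[ℂ] H, (∀ x ∈ M, e * x * r = 0) → e * z = 0 := by
  let K : Submodule ℂ H := Submodule.span ℂ {η | ∃ x ∈ M, ∃ ξ, η = x (r ξ)}
  obtain ⟨z, hz, h1, h2, h3⟩ := proj_exists M K (by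
    intro t ht x hx
    induction hx using Submodule.span_induction with
    | mem η h =>
      obtain ⟨x, hx, ξ, rfl⟩ := h
      refine Submodule.subset_span ⟨x, hx, t ξ, ?_⟩
      have a1 := congrArg (fun f => f (r ξ)) (vn_comm hx ht)
      have a2 := congrArg (fun f => f ξ) (vn_comm hr ht)
      simp only [ContinuousLinearMap.mul_apply] at a1 a2
      rw [a1, a2]
    | zero => simp
    | add a b _ _ ha hb => rw [map_add]; exact add_mem ha hb
    | smul c a _ ha => rw [map_smul]; exact Submodule.smul_mem _ c ha)
  have hinv : ∀ t ∈ M, ∀ x ∈ K, t x ∈ K := by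
    intro t ht x hx
    induction hx using Submodule.span_induction with
    | mem η h =>
      obtain ⟨x, hx, ξ, rfl⟩ := h
      exact Submodule.subset_span ⟨t * x, mul_mem ht hx, ξ, rfl⟩
    | zero => simp
    | add a b _ _ ha hb => rw [map_add]; exact add_mem ha hb
    | smul c a _ ha => rw [map_smul]; exact Submodule.smul_mem _ c ha
  refine ⟨z, ⟨hz, h3 hinv⟩, ?_, ?_⟩
  · ext ξ
    exact h1 _ (Submodule.subset_span ⟨1, one_mem M, ξ, rfl⟩)
  · intro e he
    apply h2
    intro x hx
    induction hx using Submodule.span_induction with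
    | mem η h =>
      obtain ⟨x, hx, ξ, rfl⟩ := h
      simpa using congrArg (fun f => f ξ) (he x hx)
    | zero => simp
    | add a b _ _ ha hb => rw [map_add, ha, hb, add_zero]
    | smul c a _ ha => rw [map_smul, ha, smul_zero]

theorem no_link (M : VonNeumannAlgebra H) {e f : H →L[ℂ] H} (he : IsProjIn M e) (hf : IsProjIn M f)
    (h : ∀ u ∈ M, u * star u * u = u → u * e = u → f * u = u → u = 0) :
    ∀ x ∈ M, f * x * e = 0 := by
  intro x hx
  obtain ⟨v, hv, hpi, h1, h2, h3, -⟩ := polar M (f * x * e) (mul_mem (mul_mem hf.1 hx) he.1)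
  have a1 := h1 (1 - e) (by rw [mul_sub, mul_one, mul_assoc _ e e, he.2.2, sub_self])
  have a2 := h2 (1 - f) (by rw [sub_mul, one_mul, ← mul_assoc, ← mul_assoc, hf.2.2, sub_self])
  rw [mul_sub, mul_one, sub_eq_zero] at a1
  rw [sub_mul, one_mul, sub_eq_zero] at a2
  have := h v hv hpi a1.symm a2.symm
  rw [this] at h3
  simp only [star_zero, zero_mul, mul_zero] at h3
  exact star_eq_zero.1 h3.symm

theorem initProj {M : VonNeumannAlgebra H} {v : H →L[ℂ] H} (hv : v ∈ M) (h : v * star v * v = v) :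
    IsProjIn M (star v * v) :=
  ⟨mul_mem (star_mem hv) hv, by simp [isSelfAdjoint_iff], by
    rw [mul_assoc, ← mul_assoc v, h]⟩

theorem star_pi {v : H →L[ℂ] H} (h : v * star v * v = v) : star v * v * star v = star v := by
  have := congrArg star h
  simpa [mul_assoc] using this

theorem finalProj {M : VonNeumannAlgebra H} {v : H →L[ℂ] H} (hv : v ∈ M) (h : v * star v * v = v) :
    IsProjIn M (v * star v) :=
  ⟨mul_mem hv (star_mem hv), by simp [isSelfAdjoint_iff], by
    rw [← mul_assoc, h]⟩

theorem subProj {M : VonNeumannAlgebra H} {e f : H →L[ℂ] H} (he : IsProjIn M e) (hf : IsProjIn M f)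
    (h : f * e = f) : IsProjIn M (e - f) := by
  have h' : e * f = f := by
    have := congrArg star h
    simpa [he.2.1.star_eq, hf.2.1.star_eq] using this
  exact ⟨sub_mem he.1 hf.1, he.2.1.sub hf.2.1, by
    rw [mul_sub, sub_mul, sub_mul, he.2.2, h, h', hf.2.2]; abel⟩

theorem le_symm {M : VonNeumannAlgebra H} {e f : H →L[ℂ] H} (he : IsProjIn M e) (hf : IsProjIn M f)
    (h : f * e = f) : e * f = f := by
  have := congrArg star h
  simpa [he.2.1.star_eq, hf.2.1.star_eq] using this

def Copies (M : VonNeumannAlgebra H) (P e : H →L[ℂ] H) (S : Set (H →L[ℂ] H)) : Prop :=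
  (∀ v ∈ S, v ∈ M ∧ v * star v = e ∧ v * P = v) ∧ ∀ v ∈ S, ∀ w ∈ S, v ≠ w → v * star w = 0

theorem copies_finite {M : VonNeumannAlgebra H} {P q u : H →L[ℂ] H}
    (hfin : ∀ e, IsProjIn M e → e ≠ 0 → e * P = e → ∀ S, Copies M P e S → S.Finite)
    (hu : u ∈ M) (hpi : u * star u * u = u) (hq : star u * u = q) (hle : q * (u * star u) = u * star u)
    (hqP : q * P = q) : u * star u = q := by
  by_contra hne
  have hqp : IsProjIn M q := hq ▸ initProj hu hpi
  have hup := finalProj hu hpi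
  have hle' : (u * star u) * q = u * star u := by
    have := congrArg star hle
    simpa [hqp.2.1.star_eq, mul_assoc] using this
  set e := q - u * star u with he_def
  have he : IsProjIn M e := subProj hqp hup hle'
  have hes := he.2.1.star_eq
  have hqu : q * u = u := by
    have := congrArg (fun x => x * u) hle
    simpa [mul_assoc, hpi] using (show q * (u * star u * u) = u * star u * u by
      rw [← mul_assoc]; exact this)
  have hqe : q * e = e := by rw [he_def, mul_sub, hqp.2.2, hle]
  have heq : e * q = e := by rw [he_def, sub_mul, hqp.2.2, hle']
  have heu : e * u = 0 := by rw [he_def, sub_mul, hqu, hpi, sub_self]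
  have hqn : ∀ n x, q * x = x → q * (u ^ n * x) = u ^ n * x := by
    intro n x hx
    cases n with
    | zero => simpa using hx
    | succ n => rw [pow_succ', mul_assoc, ← mul_assoc, hqu]
  have htn : ∀ n x, q * x = x → star u ^ n * (u ^ n * x) = x := by
    intro n
    induction n with
    | zero => intro x _; simp
    | succ n ih =>
      intro x hx
      rw [pow_succ (star u), pow_succ' u, mul_assoc, mul_assoc, ← mul_assoc (star u), hq, hqn n x hx, ih x hx]
  let v : ℕ → H →L[ℂ] H := fun n => e * star u ^ n
  have hsv : ∀ n, star (v n) = u ^ n * e := by intro n; simp [v, hes]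
  have hvv : ∀ n, v n * star (v n) = e := by
    intro n
    rw [hsv]; simp only [v]
    rw [mul_assoc, htn n e hqe, he.2.2]
  have hlt : ∀ n m, n < m → v n * star (v m) = 0 := by
    intro n m hnm
    obtain ⟨k, rfl⟩ := Nat.exists_eq_add_of_lt hnm
    rw [hsv]; simp only [v]
    rw [show n + k + 1 = n + (k + 1) by ring, pow_add, mul_assoc, mul_assoc, htn n _ (hqn _ _ hqe),
      pow_succ', ← mul_assoc, ← mul_assoc, heu, zero_mul, zero_mul]
  have hne2 : ∀ n m, n ≠ m → v n * star (v m) = 0 := by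
    intro n m h
    rcases lt_or_gt_of_ne h with h | h
    · exact hlt n m h
    · have := congrArg star (hlt m n h)
      simpa using this
  have he0 : e ≠ 0 := fun h => hne (sub_eq_zero.1 h).symm
  have hinj : Function.Injective v := by
    intro n m h
    by_contra hnm
    have := hne2 n m hnm
    rw [← h, hvv] at this
    exact he0 this
  have hsup : star u * q = star u := by rw [← hq, ← mul_assoc]; 
                                        have := congrArg star hpi
                                        have h3 : star u * q = star u := by
                                          have := congrArg star hqu
                                          simpa [hqp.2.1.star_eq] using this
                                        rw [mul_assoc, hq, h3]
  have hvq : ∀ n, v n * q = v n := by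
    intro n
    cases n with
    | zero => simpa [v] using heq
    | succ n => simp only [v]; rw [pow_succ, mul_assoc, mul_assoc, hsup]
  refine Set.infinite_range_of_injective hinj (hfin e he he0 ?_ (Set.range v) ⟨?_, ?_⟩)
  · rw [← heq, mul_assoc, hqP]
  · rintro _ ⟨n, rfl⟩
    refine ⟨mul_mem he.1 (pow_mem (star_mem hu) n), hvv n, ?_⟩
    rw [← hvq n, mul_assoc, hqP]
  · rintro _ ⟨n, rfl⟩ _ ⟨m, rfl⟩ h
    exact hne2 n m fun h' => h (by rw [h'])


theorem cz_ms {M : VonNeumannAlgebra H} {z x y : H →L[ℂ] H} (hz : IsCentralProj M z) (hx : x ∈ M)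
    (hy : y ∈ M) : (z * x) * star (z * y) = z * (x * star y) := by
  rw [star_mul, hz.1.2.1.star_eq, ← hz.2 _ (star_mem hy), hz.2 x hx, mul_assoc, ← mul_assoc z z, hz.1.2.2,
    ← mul_assoc, ← hz.2 x hx, mul_assoc]

theorem cz_sm {M : VonNeumannAlgebra H} {z x y : H →L[ℂ] H} (hz : IsCentralProj M z) (hx : x ∈ M)
    (hy : y ∈ M) : star (z * x) * (z * y) = z * (star x * y) := by
  rw [star_mul, hz.1.2.1.star_eq, mul_assoc, ← mul_assoc z z, hz.1.2.2, ← mul_assoc,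
    ← hz.2 _ (star_mem hx), mul_assoc]

theorem coiso {e v : H →L[ℂ] H} (hs : star e = e) (he : e * e = e) (hv : v * star v = e) : e * v = v := by
  have h : star (star (e * v - v)) * star (e * v - v) = 0 := by
    rw [star_star, star_sub, star_mul, hs, mul_sub, sub_mul, sub_mul]
    rw [mul_assoc e v, ← mul_assoc v (star v), hv, mul_assoc e v, hv, he, he]
    simp
  have := star_eq_zero.1 (star_mul_self_zero h)
  exact sub_eq_zero.1 this

theorem IsPISum.mul_r {M : VonNeumannAlgebra H} {ι : Type*} {v : ι → H →L[ℂ] H} {V e : H →L[ℂ] H}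
    (h : IsPISum M v V) (he : ∀ i, v i * e = v i) : V * e = V := by
  refine hasSum_uniq (hasSum_mul_right h.hs e) ?_
  simpa only [he] using h.hs

theorem IsPISum.mul_l {M : VonNeumannAlgebra H} {ι : Type*} {v : ι → H →L[ℂ] H} {V e : H →L[ℂ] H}
    (h : IsPISum M v V) (he : ∀ i, e * v i = v i) : e * V = V := by
  refine hasSum_uniq (hasSum_mul_left h.hs e) ?_
  simpa only [he] using h.hs

theorem compl_central {M : VonNeumannAlgebra H} {z : H →L[ℂ] H} (hz : IsCentralProj M z) :
    IsCentralProj M (1 - z) := by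
  refine ⟨⟨sub_mem (one_mem M) hz.1.1, (IsSelfAdjoint.one _).sub hz.1.2.1, ?_⟩, fun x hx => ?_⟩
  · rw [mul_sub, sub_mul, sub_mul, hz.1.2.2]; simp
  · rw [sub_mul, mul_sub, hz.2 x hx]; simp

theorem copies (M : VonNeumannAlgebra H) {P e : H →L[ℂ] H} (hP : IsProjIn M P) (he : IsProjIn M e)
    (he0 : e ≠ 0) (heP : e * P = e) (S0 : Set (H →L[ℂ] H)) (h0 : Copies M P e S0) :
    ∃ (z : H →L[ℂ] H) (S : Set (H →L[ℂ] H)) (a : S ⊕ Unit → H →L[ℂ] H), IsCentralProj M z ∧ z * e ≠ 0 ∧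
      S0 ⊆ S ∧ S.Nonempty ∧ Copies M P e S ∧ (∀ j, a j ∈ M ∧ e * a j = a j ∧ z * a j = a j) ∧
      (∀ i j, i ≠ j → a i * star (a j) = 0) ∧ (∀ s, a (Sum.inl s) * star (a (Sum.inl s)) = z * e) ∧
      (∀ j, a j * star (a j) * a j = a j) ∧
      ∀ ξ, HasSum (fun j => (star (a j) * a j) ξ) ((z * P) ξ) := by
  obtain ⟨S, hS0, hS⟩ := zorn_subset_nonempty {S | Copies M P e S} (by
    intro c hc hch _
    refine ⟨⋃₀ c, ⟨?_, ?_⟩, fun s hs => Set.subset_sUnion_of_mem hs⟩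
    · rintro v ⟨s, hs, hv⟩
      exact (hc hs).1 v hv
    · rintro v ⟨s, hs, hv⟩ w ⟨t, ht, hw⟩ hne
      rcases hch.total hs ht with h | h
      · exact (hc ht).2 v (h hv) w hw hne
      · exact (hc hs).2 v hv w (h hw) hne) S0 h0
  have hC : Copies M P e S := hS.prop
  have hes := he.2.1.star_eq
  have hSne : S.Nonempty := by
    by_contra hne
    rw [Set.not_nonempty_iff_eq_empty] at hne
    have h1 : Copies M P e {e} := by
      refine ⟨?_, ?_⟩
      · rintro v rfl; exact ⟨he.1, by rw [hes, he.2.2], heP⟩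
      · rintro v rfl w rfl h; exact absurd rfl h
    have := hS.le_of_ge h1 (by rw [hne]; exact Set.empty_subset _) (Set.mem_singleton e)
    rw [hne] at this; exact this
  have hev : ∀ v ∈ S, e * v = v := fun v hv => coiso hes he.2.2 (hC.1 v hv).2.1
  have hpi : ∀ v ∈ S, v * star v * v = v := fun v hv => by rw [(hC.1 v hv).2.1, hev v hv]
  have hF : PIFam M (fun v : S => star (v : H →L[ℂ] H) * v) := by
    have hp : ∀ v : S, IsProjIn M (star (v : H →L[ℂ] H) * v) := fun v => initProj (hC.1 v v.2).1 (hpi v v.2)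
    have ho : ∀ v w : S, v ≠ w → star (v : H →L[ℂ] H) * v * (star (w : H →L[ℂ] H) * w) = 0 := by
      intro v w h
      rw [mul_assoc, ← mul_assoc (v : H →L[ℂ] H), hC.2 v v.2 w w.2 (fun h' => h (Subtype.ext h')), zero_mul,
        mul_zero]
    refine ⟨fun v => (hp v).1, fun v => ?_, fun v w h => ?_, fun v w h => ?_⟩
    · simp only [(hp v).2.1.star_eq, (hp v).2.2]
    · simp only [(hp v).2.1.star_eq]; exact ho v w h
    · simp only [(hp w).2.1.star_eq]; exact ho v w h
  obtain ⟨E, hE⟩ := hF.sum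
  have hEE : star E * E = E := by
    refine hasSum_uniq hE.hss ?_
    have := hE.hs
    intro ξ
    convert this ξ using 2 with v
    have hp := initProj (hC.1 v v.2).1 (hpi v v.2)
    rw [hp.2.1.star_eq, hp.2.2]
  have hEs : star E = E := by
    have := congrArg star hEE
    rw [star_mul, star_star, hEE] at this; exact this.symm
  have hEp : IsProjIn M E := ⟨hE.mem, hEs, by nth_rw 1 [← hEs]; exact hEE⟩
  have hEP : E * P = E := hE.mul_r fun v => by rw [mul_assoc, (hC.1 v v.2).2.2]
  have hvE : ∀ v ∈ S, v * E = v := by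
    intro v hv
    have h1 := hE.hl ⟨v, hv⟩
    simp only at h1
    have h2 := initProj (hC.1 v hv).1 (hpi v hv)
    rw [h2.2.1.star_eq, h2.2.2] at h1
    have h3 := congrArg (fun x => v * x) h1
    rw [← mul_assoc, ← mul_assoc, hpi v hv] at h3
    exact h3
  set r := P - E with hr_def
  have hr : IsProjIn M r := subProj hP hEp hEP
  have hrs := hr.2.1.star_eq
  have hvr : ∀ v ∈ S, v * r = 0 := fun v hv => by rw [hr_def, mul_sub, (hC.1 v hv).2.2, hvE v hv, sub_self]
  have hrP : r * P = r := by rw [hr_def, sub_mul, hP.2.2, hEP]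
  have hno : ∀ u ∈ M, u * star u = e → u * r = u → False := by
    intro u hu h1 h2
    have h3 : ∀ v ∈ S, u * star v = 0 := by
      intro v hv
      have := congrArg star (hvr v hv)
      rw [star_mul, hrs, star_zero] at this
      rw [← h2, mul_assoc, this, mul_zero]
    have h4 : Copies M P e (insert u S) := by
      refine ⟨?_, ?_⟩
      · rintro v (rfl | hv)
        · exact ⟨hu, h1, by rw [← h2, mul_assoc, hrP]⟩
        · exact hC.1 v hv
      · rintro v (rfl | hv) w (rfl | hw) hne
        · exact absurd rfl hne
        · exact h3 w hw
        · have := congrArg star (h3 v hv)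
          simpa using this
        · exact hC.2 v hv w hw hne
    have h5 := hS.le_of_ge h4 (Set.subset_insert u S) (Set.mem_insert u S)
    have h6 := hvr u h5
    rw [h2] at h6
    exact he0 (by rw [← h1, h6, zero_mul])
  obtain ⟨S1, V, hF1, hS1, hV, hmax⟩ := pi_zorn M (fun _ => True) r e
  have hVr : V * r = V := hV.mul_r fun v => (hS1 v v.2).2.1
  have heV : e * V = V := hV.mul_l fun v => (hS1 v v.2).2.2
  have hrV : r * star V = star V := by have := congrArg star hVr; rwa [star_mul, hrs] at this
  have hVp := initProj hV.mem hV.pi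
  have hVf := finalProj hV.mem hV.pi
  have hr' : IsProjIn M (r - star V * V) := subProj hr hVp (by rw [mul_assoc, hVr])
  have he' : IsProjIn M (e - V * star V) := subProj he hVf (by
    have := congrArg star heV
    rw [star_mul, hes] at this
    rw [mul_assoc, this])
  have hVst := star_pi hV.pi
  have hnl := no_link M hr' he' (by
    intro u hu hup h1 h2
    have a1 : (r - star V * V) * star V = 0 := by rw [sub_mul, hrV, hVst, sub_self]
    have a2 : (e - V * star V) * V = 0 := by rw [sub_mul, heV, hV.pi, sub_self]
    refine hmax u hu hup trivial ?_ ?_ ?_ ?_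
    · rw [← h1, mul_assoc, sub_mul, hr.2.2, mul_assoc, hVr]
    · rw [← h2, ← mul_assoc, mul_sub, he.2.2, ← mul_assoc, heV]
    · rw [← h1, mul_assoc, a1, mul_zero]
    · have := congrArg star h2
      rw [star_mul, he'.2.1.star_eq] at this
      rw [← this, mul_assoc, a2, mul_zero])
  obtain ⟨c, hc, hcr, hce⟩ := csupp M _ hr'.1
  have hec := hce _ hnl
  have hz := compl_central hc
  refine ⟨1 - c, S, Sum.elim (fun v => (1 - c) * v) (fun _ => (1 - c) * V), hz, ?_, hS0, hSne, hC, ?_, ?_,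
    ?_, ?_, ?_⟩
  · intro h
    rw [sub_mul, one_mul, sub_eq_zero] at h
    refine hno (c * V) (mul_mem hc.1.1 hV.mem) ?_ (by rw [mul_assoc, hVr])
    rw [cz_ms hc hV.mem hV.mem]
    rw [← hc.2 _ he'.1, mul_sub, sub_eq_zero] at hec
    rw [← hec, ← h]
  · rintro (v | _)
    · refine ⟨mul_mem hz.1.1 (hC.1 v v.2).1, ?_, ?_⟩
      · simp only [Sum.elim_inl]
        rw [← mul_assoc, ← hz.2 e he.1, mul_assoc, hev v v.2]
      · simp only [Sum.elim_inl]
        rw [← mul_assoc, hz.1.2.2]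
    · refine ⟨mul_mem hz.1.1 hV.mem, ?_, ?_⟩
      · simp only [Sum.elim_inr]
        rw [← mul_assoc, ← hz.2 e he.1, mul_assoc, heV]
      · simp only [Sum.elim_inr]
        rw [← mul_assoc, hz.1.2.2]
  · have hVv : ∀ v : S, V * star (v : H →L[ℂ] H) = 0 := by
      intro v
      have := congrArg star (hvr v v.2)
      rw [star_mul, hrs, star_zero] at this
      rw [← hVr, mul_assoc, this, mul_zero]
    rintro (v | _) (w | _) hne
    · simp only [Sum.elim_inl]
      rw [cz_ms hz (hC.1 v v.2).1 (hC.1 w w.2).1, hC.2 v v.2 w w.2 (fun h => hne (by rw [Subtype.ext h])),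
        mul_zero]
    · simp only [Sum.elim_inl, Sum.elim_inr]
      have := congrArg star (hVv v)
      rw [star_mul, star_star, star_zero] at this
      rw [cz_ms hz (hC.1 v v.2).1 hV.mem, this, mul_zero]
    · simp only [Sum.elim_inl, Sum.elim_inr]
      rw [cz_ms hz hV.mem (hC.1 w w.2).1, hVv w, mul_zero]
    · exact absurd rfl hne
  · intro v
    simp only [Sum.elim_inl]
    rw [cz_ms hz (hC.1 v v.2).1 (hC.1 v v.2).1, (hC.1 v v.2).2.1]
  · have key : ∀ v ∈ M, v * star v * v = v → (1 - c) * v * star ((1 - c) * v) * ((1 - c) * v) = (1 - c) * v := by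
      intro v hv h
      rw [cz_ms hz hv hv, hz.2 v hv, mul_assoc, ← mul_assoc (v * star v), h, ← hz.2 v hv, ← mul_assoc, hz.1.2.2]
    rintro (v | _)
    · exact key v (hC.1 v v.2).1 (hpi v v.2)
    · exact key V hV.mem hV.pi
  · intro ξ
    have h1 : HasSum (fun v : S => (star ((1 - c) * (v : H →L[ℂ] H)) * ((1 - c) * v)) ξ) (((1 - c) * E) ξ) := by
      have := hasSum_mul_left hE.hs (1 - c) ξ
      convert this using 2 with v
      rw [cz_sm hz (hC.1 v v.2).1 (hC.1 v v.2).1]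
    have h2 : (1 - c) * r = star ((1 - c) * V) * ((1 - c) * V) := by
      rw [cz_sm hz hV.mem hV.mem]
      rw [sub_mul, sub_mul, one_mul, one_mul]
      rw [mul_sub, sub_eq_iff_eq_add] at hcr
      rw [hcr]; abel
    have h3 : (1 - c) * P = (1 - c) * E + (1 - c) * r := by rw [← mul_add, hr_def]; simp
    rw [h3, h2]
    exact HasSum.sum (f := fun j => (star (Sum.elim (fun v : S => (1 - c) * (v : H →L[ℂ] H)) (fun _ : Unit => (1 - c) * V) j) * (Sum.elim (fun v : S => (1 - c) * (v : H →L[ℂ] H)) (fun _ : Unit => (1 - c) * V) j)) ξ) h1 (hasSum_unique (fun _ : Unit => (star ((1 - c) * V) * ((1 - c) * V)) ξ))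


def Dbl (M : VonNeumannAlgebra H) (p w : H →L[ℂ] H) : Prop :=
  ∃ s ∈ M, ∃ t ∈ M, star s * s = w * p ∧ star t * t = w * p ∧ star s * t = 0 ∧ p * s = s ∧ p * t = t

theorem a_mul_P {M : VonNeumannAlgebra H} {P z : H →L[ℂ] H} {J : Type*} {a : J → H →L[ℂ] H}
    (hP : IsProjIn M P)
    (hpi : ∀ j, a j * star (a j) * a j = a j)
    (ho : ∀ i j, i ≠ j → a i * star (a j) = 0)
    (hsum : ∀ ξ, HasSum (fun j => (star (a j) * a j) ξ) ((z * P) ξ)) (k : J) : a k * P = a k := by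
  have h := hasSum_op_single (hasSum_mul_left hsum (a k)) k (by
    intro j hj
    rw [← mul_assoc, ho k j hj.symm, zero_mul])
  rw [← mul_assoc (a k) (star (a k)), hpi] at h
  rw [← h, mul_assoc, mul_assoc, hP.2.2]

theorem shuffle {M : VonNeumannAlgebra H} {P z e : H →L[ℂ] H} {S : Type*} {a : S ⊕ Unit → H →L[ℂ] H}
    (hP : IsProjIn M P) (ha : ∀ j, a j ∈ M ∧ e * a j = a j ∧ z * a j = a j)
    (ho : ∀ i j, i ≠ j → a i * star (a j) = 0)
    (hae : ∀ s, a (Sum.inl s) * star (a (Sum.inl s)) = z * e)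
    (hpi : ∀ j, a j * star (a j) * a j = a j)
    (hsum : ∀ ξ, HasSum (fun j => (star (a j) * a j) ξ) ((z * P) ξ))
    (φ : S ⊕ Unit → S) (hφ : Function.Injective φ) :
    ∃ s ∈ M, star s * s = z * P ∧ P * s = s ∧
      ∀ y : H →L[ℂ] H, (∀ j, y * star (a (Sum.inl (φ j))) = 0) → y * s = 0 := by
  have haP := a_mul_P hP hpi ho hsum
  have hss : ∀ j, star (star (a (Sum.inl (φ j))) * a j) * (star (a (Sum.inl (φ j))) * a j) = star (a j) * a j := by
    intro j
    rw [star_mul, star_star, mul_assoc, ← mul_assoc (a (Sum.inl (φ j))), hae, mul_assoc z, (ha j).2.1, (ha j).2.2]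
  have hF : PIFam M (fun j => star (a (Sum.inl (φ j))) * a j) := by
    refine ⟨fun j => mul_mem (star_mem (ha _).1) (ha j).1, fun j => ?_, fun i j hij => ?_, fun i j hij => ?_⟩
    · simp only
      rw [mul_assoc, hss, mul_assoc, ← mul_assoc (a j), hpi]
    · simp only
      rw [star_mul, star_star, mul_assoc, ← mul_assoc (a (Sum.inl (φ i))), ho, zero_mul, mul_zero]
      exact fun h => hij (hφ (Sum.inl_injective h))
    · simp only
      rw [star_mul, star_star, mul_assoc, ← mul_assoc (a i), ho i j hij, zero_mul, mul_zero]
  obtain ⟨s, hs⟩ := hF.sum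
  refine ⟨s, hs.mem, ?_, ?_, ?_⟩
  · refine hasSum_uniq hs.hss ?_
    simpa only [hss] using hsum
  · apply hs.mul_l
    intro j
    have := congrArg star (haP (Sum.inl (φ j)))
    rw [star_mul, hP.2.1.star_eq] at this
    rw [← mul_assoc, this]
  · intro y hy
    refine hasSum_uniq (hasSum_mul_left hs.hs y) fun ξ => ?_
    simp only [← mul_assoc, hy, zero_mul]
    simpa using hasSum_zero

theorem dbl_inf {M : VonNeumannAlgebra H} {P z e : H →L[ℂ] H} {S : Type*} [Infinite S] {a : S ⊕ Unit → H →L[ℂ] H}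
    (hP : IsProjIn M P) (ha : ∀ j, a j ∈ M ∧ e * a j = a j ∧ z * a j = a j)
    (ho : ∀ i j, i ≠ j → a i * star (a j) = 0)
    (hae : ∀ s, a (Sum.inl s) * star (a (Sum.inl s)) = z * e)
    (hpi : ∀ j, a j * star (a j) * a j = a j)
    (hsum : ∀ ξ, HasSum (fun j => (star (a j) * a j) ξ) ((z * P) ξ)) : Dbl M P z := by
  obtain ⟨ψ⟩ : Nonempty (((S ⊕ Unit) ⊕ (S ⊕ Unit)) ↪ S) := by
    rw [← Cardinal.le_def]
    have h : Cardinal.aleph0 ≤ Cardinal.mk S := Cardinal.aleph0_le_mk S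
    simp [Cardinal.add_one_eq h, Cardinal.add_eq_self h]
  obtain ⟨s, hsM, hs1, hs2, hs3⟩ := shuffle hP ha ho hae hpi hsum (fun j => ψ (Sum.inl j))
    (ψ.injective.comp Sum.inl_injective)
  obtain ⟨t, htM, ht1, ht2, ht3⟩ := shuffle hP ha ho hae hpi hsum (fun j => ψ (Sum.inr j))
    (ψ.injective.comp Sum.inr_injective)
  refine ⟨s, hsM, t, htM, hs1, ht1, ?_, hs2, ht2⟩
  apply ht3
  intro k
  rw [← star_mul, hs3, star_zero]
  intro j
  apply ho
  intro h
  have := ψ.injective (Sum.inl_injective h)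
  simp at this

theorem central_mul {M : VonNeumannAlgebra H} {z w : H →L[ℂ] H} (hz : IsCentralProj M z)
    (hw : IsCentralProj M w) : IsCentralProj M (z * w) := by
  refine ⟨⟨mul_mem hz.1.1 hw.1.1, ?_, ?_⟩, ?_⟩
  · rw [isSelfAdjoint_iff, star_mul, hz.1.2.1.star_eq, hw.1.2.1.star_eq, hw.2 _ hz.1.1]
  · rw [mul_assoc, ← mul_assoc w, hw.2 _ hz.1.1, mul_assoc, hw.1.2.2, ← mul_assoc, hz.1.2.2]
  · intro x hx
    rw [mul_assoc, hw.2 x hx, ← mul_assoc, hz.2 x hx, mul_assoc]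

theorem central_proj_mul {M : VonNeumannAlgebra H} {z p : H →L[ℂ] H} (hz : IsCentralProj M z)
    (hp : IsProjIn M p) : IsProjIn M (z * p) := by
  refine ⟨mul_mem hz.1.1 hp.1, ?_, ?_⟩
  · rw [isSelfAdjoint_iff, star_mul, hz.1.2.1.star_eq, hp.2.1.star_eq, hz.2 _ hp.1]
  · rw [mul_assoc, ← mul_assoc p, ← hz.2 _ hp.1, mul_assoc, hp.2.2, ← mul_assoc, hz.1.2.2]

theorem finite_of_no_dbl {M : VonNeumannAlgebra H} {p z0 : H →L[ℂ] H} (hp : IsProjIn M p)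
    (hz0 : IsCentralProj M z0) (h : ∀ w, IsCentralProj M w → w * z0 = w → Dbl M p w → w = 0) :
    ∀ e, IsProjIn M e → e ≠ 0 → e * (z0 * p) = e → ∀ S, Copies M (z0 * p) e S → S.Finite := by
  intro e he he0 heP S0 hC0
  by_contra hinf
  have hP := central_proj_mul hz0 hp
  obtain ⟨z, S, a, hz, hze, hSS, -, -, ha, ho, hae, hpi, hsum⟩ := copies M hP he he0 heP S0 hC0
  have : Infinite S := Set.Infinite.to_subtype (Set.Infinite.mono hSS hinf)
  obtain ⟨s, hsM, t, htM, h1, h2, h3, h4, h5⟩ := dbl_inf hP ha ho hae hpi hsum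
  have hw := h (z * z0) (central_mul hz hz0) (by rw [mul_assoc, hz0.1.2.2]) ⟨s, hsM, t, htM, by
    rw [h1, mul_assoc], by rw [h2, mul_assoc], h3, ?_, ?_⟩
  · apply hze
    rw [← heP, hz0.2 p hp.1, ← mul_assoc e, ← hz0.2 _ (mul_mem he.1 hp.1), ← mul_assoc, hw, zero_mul]
  · rw [← h4, ← mul_assoc, ← mul_assoc, ← hz0.2 p hp.1, mul_assoc z0, hp.2.2]
  · rw [← h5, ← mul_assoc, ← mul_assoc, ← hz0.2 p hp.1, mul_assoc z0, hp.2.2]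


theorem y_bound {M : VonNeumannAlgebra H} {e0 f0 : H →L[ℂ] H} {ξ : H}
    (hmax : ∀ u ∈ M, u * star u * u = u → u * e0 = u → f0 * u = u → ‖u ξ‖ ≤ ‖(star u) ξ‖) :
    ∀ y ∈ M, y * e0 = y → f0 * y = y → ‖y ξ‖ ≤ ‖(star y) ξ‖ := by
  intro y hy hye hfy
  obtain ⟨v, hv, hpi, h1, h2, h3, h4⟩ := polar M y hy
  have hve : v * e0 = v := by
    have := h1 (1 - e0) (by rw [mul_sub, mul_one, hye, sub_self])
    rw [mul_sub, mul_one, sub_eq_zero] at this; exact this.symm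
  have hfv : f0 * v = v := by
    have := h2 (1 - f0) (by rw [sub_mul, one_mul, hfy, sub_self])
    rw [sub_mul, one_mul, sub_eq_zero] at this; exact this.symm
  have hn : ‖(y * star v) ξ‖ = ‖(star y) ξ‖ := by
    apply norm_le_iff_test
    rw [star_mul, star_star, star_star, h4]
    simp only [mul_assoc]
  refine le_of_sq_le_sq ?_ (norm_nonneg _) 
  refine le_of_forall_pos_le_add fun ε hε => ?_
  have hδ : 0 < ε / (‖ξ‖ ^ 2 + 1) := by positivity
  obtain ⟨n, E, hE, hE0, hb1, hb2⟩ := layer M (star y * y) (mul_mem (star_mem hy) hy) (star_mul_self_nonneg y) _ hδ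
  set δ := ε / (‖ξ‖ ^ 2 + 1) with hδd
  have hEk : ∀ k, ‖E k ξ‖ ≤ ‖E k ((star v) ξ)‖ := by
    intro k
    have a1 : star v * v * E k = E k := by
      have := hE0 k (1 - star v * v) (by
        rw [← mul_assoc, sub_mul, one_mul, h3, sub_self, zero_mul])
      rw [sub_mul, one_mul, sub_eq_zero] at this; exact this.symm
    have hs := (hE k).2.1.star_eq
    have a2 : E k * (star v * v) = E k := by
      have := congrArg star a1
      rw [star_mul, star_mul, star_star, hs] at this; exact this
    have a3 : E k * e0 = E k := by
      rw [← a2, mul_assoc, mul_assoc, hve]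
    have a4 : star (v * E k) = E k * star v := by rw [star_mul, hs]
    have a5 : star (v * E k) * (v * E k) = star (E k) * E k := by
      rw [a4, mul_assoc, ← mul_assoc (star v), a1, hs]
    have := hmax (v * E k) (mul_mem hv (hE k).1) (by
      rw [mul_assoc, a5, hs, (hE k).2.2, mul_assoc, (hE k).2.2]) (by rw [mul_assoc, a3])
      (by rw [← mul_assoc, hfv])
    rw [norm_le_iff_test a5, a4] at this
    exact this
  have b1 := hb1 ξ
  have b2 := hb2 ((star v) ξ)
  rw [← nsq] at b1 b2
  have b3 : y ((star v) ξ) = (y * star v) ξ := rfl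
  rw [b3, hn] at b2
  have b4 : ∑ k ∈ Finset.range n, δ * ‖E (k + 1) ξ‖ ^ 2 ≤ ∑ k ∈ Finset.range n, δ * ‖E (k + 1) ((star v) ξ)‖ ^ 2 := by
    refine Finset.sum_le_sum fun k _ => ?_
    have := hEk (k + 1)
    gcongr
  have b5 : δ * ‖ξ‖ ^ 2 ≤ ε := by
    rw [hδd, div_mul_eq_mul_div, div_le_iff₀ (by positivity)]
    nlinarith
  linarith

theorem vec_compare {M : VonNeumannAlgebra H} {P : H →L[ℂ] H} (hP : IsProjIn M P) (hP0 : P ≠ 0)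
    (hfin : ∀ e, IsProjIn M e → e ≠ 0 → e * P = e → ∀ S, Copies M P e S → S.Finite) :
    ∃ (ξ : H) (R e0 f0 w0 : H →L[ℂ] H), IsProjIn M R ∧ R * P = R ∧ (∀ q ∈ M, q ξ = 0 → q * R = 0) ∧
      e0 * R = e0 ∧ w0 ∈ M ∧ w0 * star w0 * w0 = w0 ∧ w0 ≠ 0 ∧ w0 * e0 = w0 ∧ f0 * w0 = w0 ∧
      IsProjIn M e0 ∧ 
      ∀ y ∈ M, y * e0 = y → f0 * y = y → ‖y ξ‖ ≤ ‖(star y) ξ‖ := by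
  obtain ⟨η, hη⟩ : ∃ η, P η ≠ 0 := by
    by_contra h
    push Not at h
    exact hP0 (by ext η; simpa using h η)
  set ξ := P η with hξ
  obtain ⟨R, hR, hR1, hR2, -⟩ := proj_exists M (Submodule.span ℂ {x | ∃ t ∈ M.commutant, x = t ξ}) (by
    intro t ht x hx
    induction hx using Submodule.span_induction with
    | mem x h =>
      obtain ⟨s, hs, rfl⟩ := h
      exact Submodule.subset_span ⟨t * s, mul_mem ht hs, rfl⟩
    | zero => simp
    | add a b _ _ ha hb => rw [map_add]; exact add_mem ha hb
    | smul c a _ ha => rw [map_smul]; exact Submodule.smul_mem _ c ha)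
  have hfaith : ∀ q ∈ M, q ξ = 0 → q * R = 0 := by
    intro q hq h
    apply hR2
    intro x hx
    induction hx using Submodule.span_induction with
    | mem x hx =>
      obtain ⟨s, hs, rfl⟩ := hx
      have := congrArg (fun f => f ξ) (vn_comm hq hs)
      simp only [ContinuousLinearMap.mul_apply] at this
      rw [← this, h, map_zero]
    | zero => simp
    | add a b _ _ ha hb => rw [map_add, ha, hb, add_zero]
    | smul c a _ ha => rw [map_smul, ha, smul_zero]
  have hRξ : R ξ = ξ := hR1 ξ (Submodule.subset_span ⟨1, one_mem _, rfl⟩)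
  have hPR : P * R = R := by
    have := hfaith (1 - P) (sub_mem (one_mem M) hP.1) (by
      have : P (P η) = P η := by rw [← ContinuousLinearMap.mul_apply, hP.2.2]
      rw [hξ, _root_.sub_apply, this]; simp)
    rw [sub_mul, one_mul, sub_eq_zero] at this; exact this.symm
  have hRs := hR.2.1.star_eq
  have hRP : R * P = R := by
    have := congrArg star hPR
    rwa [star_mul, hP.2.1.star_eq, hRs] at this
  obtain ⟨S, V, hF, hS, hV, hmax⟩ := pi_zorn M (fun v => ‖(star v) ξ‖ < ‖v ξ‖) R R
  have hVR : V * R = V := hV.mul_r fun v => (hS v v.2).2.1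
  have hRV : R * V = V := hV.mul_l fun v => (hS v v.2).2.2
  have hVst := star_pi hV.pi
  have hVsR : star V * R = star V := by have := congrArg star hRV; rwa [star_mul, hRs] at this
  have hRVs : R * star V = star V := by have := congrArg star hVR; rwa [star_mul, hRs] at this
  have hVp := initProj hV.mem hV.pi
  have hVf := finalProj hV.mem hV.pi
  have he0 : IsProjIn M (R - star V * V) := subProj hR hVp (by rw [mul_assoc, hVR])
  have hf0 : IsProjIn M (R - V * star V) := subProj hR hVf (by rw [mul_assoc, hVsR])
  have heV : (R - star V * V) * star V = 0 := by rw [sub_mul, hRVs, hVst, sub_self]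
  have hfV : (R - V * star V) * V = 0 := by rw [sub_mul, hRV, hV.pi, sub_self]
  have heR : (R - star V * V) * R = R - star V * V := by rw [sub_mul, hR.2.2, mul_assoc, hVR]
  have hRf : R * (R - V * star V) = R - V * star V := by rw [mul_sub, hR.2.2, ← mul_assoc, hRV]
  have hw : ∃ w0 ∈ M, w0 * star w0 * w0 = w0 ∧ w0 ≠ 0 ∧ w0 * (R - star V * V) = w0 ∧
      (R - V * star V) * w0 = w0 := by
    by_contra hcon
    push Not at hcon
    have hnl := no_link M he0 hf0 (by
      intro u hu hpi h1 h2
      by_contra h0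
      exact hcon u hu hpi h0 h1 h2)
    obtain ⟨z, hz, hze, hzf⟩ := csupp M _ he0.1
    have hfz := hzf _ hnl
    rw [← hz.2 _ hf0.1, mul_sub, sub_eq_zero] at hfz
    have hzV : z * V ∈ M := mul_mem hz.1.1 hV.mem
    have hzz : z * V * star (z * V) = z * R := by rw [cz_ms hz hV.mem hV.mem, ← hfz]
    have hzz' : star (z * V) * (z * V) = z * (star V * V) := cz_sm hz hV.mem hV.mem
    have e1 := copies_finite (q := z * R) (u := star (z * V)) hfin (star_mem hzV) (by
        rw [star_star, hzz', star_mul, hz.1.2.1.star_eq, ← hz.2 _ (star_mem hV.mem), mul_assoc z, ← mul_assoc _ z,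
          ← hz.2 _ hVp.1, mul_assoc z, hVst, ← mul_assoc, hz.1.2.2]) (by rw [star_star, hzz]) (by
        rw [star_star, hzz', hz.2 R hR.1, mul_assoc, ← mul_assoc z, hz.1.2.2, ← mul_assoc, ← hz.2 R hR.1, mul_assoc,
          ← mul_assoc R, hRVs]) (by rw [mul_assoc, hRP])
    rw [star_star, hzz'] at e1
    have e2 : R = star V * V := by
      rw [mul_sub, e1, sub_self] at hze
      exact sub_eq_zero.1 hze.symm
    have e3 := copies_finite (q := R) hfin hV.mem hV.pi e2.symm (by rw [← mul_assoc, hRV]) hRP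
    have n1 : ‖V ξ‖ = ‖(star V) ξ‖ := norm_le_iff_test (by rw [star_star, e3, ← e2]) ξ
    have n2 : ‖V ξ‖ = ‖ξ‖ := by
      rw [norm_le_iff_test (b := R) (by rw [hRs, hR.2.2, ← e2]) ξ, hRξ]
    rcases S.eq_empty_or_nonempty with hemp | ⟨v, hv⟩
    · have : IsEmpty S := by rw [hemp]; infer_instance
      have h0 := (hV.hs ξ).unique hasSum_empty
      rw [h0, norm_zero] at n2
      exact hη (norm_eq_zero.1 n2.symm)
    · have := hasSum_lt (i := (⟨v, hv⟩ : S)) (fun u => by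
        have := (hS u u.2).1.le
        show ‖(star (u : H →L[ℂ] H)) ξ‖ ^ 2 ≤ ‖(u : H →L[ℂ] H) ξ‖ ^ 2
        gcongr) (by
        have := (hS v hv).1
        show ‖(star (v : H →L[ℂ] H)) ξ‖ ^ 2 < ‖(v : H →L[ℂ] H) ξ‖ ^ 2
        gcongr) (hV.hn' ξ) (hV.hn ξ)
      rw [n1] at this
      exact lt_irrefl _ this
  obtain ⟨w0, hw0, hw1, hw2, hw3, hw4⟩ := hw
  refine ⟨ξ, R, R - star V * V, R - V * star V, w0, hR, hRP, hfaith, heR, hw0, hw1, hw2, hw3, hw4, he0, ?_⟩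
  apply y_bound
  intro u hu hpi h1 h2
  by_contra hlt
  push Not at hlt
  have h0 := hmax u hu hpi hlt (by rw [← h1, mul_assoc, heR]) (by rw [← h2, ← mul_assoc, hRf])
    (by rw [← h1, mul_assoc, heV, mul_zero]) (by
      have := congrArg star h2
      rw [star_mul, hf0.2.1.star_eq] at this
      rw [← this, mul_assoc, hfV, mul_zero])
  rw [h0] at hlt
  simp at hlt


theorem hasSum_prod_nonneg {α β : Type*} {f : α × β → ℝ} {g : α → ℝ} {s : ℝ} (h0 : ∀ i, 0 ≤ f i)
    (h1 : ∀ i, HasSum (fun j => f (i, j)) (g i)) (h2 : HasSum g s) : HasSum f s := by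
  have hs : Summable f := by
    rw [summable_prod_of_nonneg (fun i => h0 i)]
    refine ⟨fun i => (h1 i).summable, ?_⟩
    have : (fun i => ∑' j, f (i, j)) = g := funext fun i => (h1 i).tsum_eq
    rw [this]; exact h2.summable
  have := hs.hasSum.prod_fiberwise h1
  rw [h2.unique this]; exact hs.hasSum

def Fam (M : VonNeumannAlgebra H) (p : H →L[ℂ] H) (a b : ℝ) : Prop :=
  ∃ (ι : Type u) (x : ι → H →L[ℂ] H), (∀ i, x i ∈ M ∧ p * x i = x i ∧ x i * p = x i) ∧
    (∀ η, HasSum (fun i => ‖x i η‖ ^ 2) (a * ‖p η‖ ^ 2)) ∧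
    (∀ η, HasSum (fun i => ‖(star (x i)) η‖ ^ 2) (b * ‖p η‖ ^ 2))

theorem Fam.symm {M : VonNeumannAlgebra H} {p : H →L[ℂ] H} {a b : ℝ} (hp : IsProjIn M p) (h : Fam M p a b) :
    Fam M p b a := by
  obtain ⟨ι, x, h1, h2, h3⟩ := h
  refine ⟨ι, fun i => star (x i), fun i => ⟨star_mem (h1 i).1, ?_, ?_⟩, h3, ?_⟩
  · have := congrArg star (h1 i).2.2
    rwa [star_mul, hp.2.1.star_eq] at this
  · have := congrArg star (h1 i).2.1
    rwa [star_mul, hp.2.1.star_eq] at this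
  · simpa only [star_star] using h2

theorem Fam.mul_aux {p : H →L[ℂ] H} {a c : ℝ} {ι κ : Type*} {x : ι → H →L[ℂ] H} {y : κ → H →L[ℂ] H}
    (hy : ∀ i, p * y i = y i) (h2 : ∀ η, HasSum (fun i => ‖x i η‖ ^ 2) (a * ‖p η‖ ^ 2))
    (g2 : ∀ η, HasSum (fun i => ‖y i η‖ ^ 2) (c * ‖p η‖ ^ 2)) (η : H) :
    HasSum (fun ij : κ × ι => ‖(x ij.2 * y ij.1) η‖ ^ 2) ((a * c) * ‖p η‖ ^ 2) := by
  refine hasSum_prod_nonneg (g := fun j => a * ‖y j η‖ ^ 2) (fun _ => by positivity) (fun j => ?_) ?_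
  · have := h2 (y j η)
    rw [← ContinuousLinearMap.mul_apply p, hy] at this
    exact this
  · rw [mul_assoc]; exact (g2 η).mul_left a

theorem Fam.mul {M : VonNeumannAlgebra H} {p : H →L[ℂ] H} {a b c d : ℝ} (hp : IsProjIn M p) (h : Fam M p a b)
    (g : Fam M p c d) : Fam M p (a * c) (b * d) := by
  obtain ⟨ι, x, h1, h2, h3⟩ := h
  obtain ⟨κ, y, g1, g2, g3⟩ := g
  refine ⟨κ × ι, fun ij => x ij.2 * y ij.1, fun ij => ⟨mul_mem (h1 _).1 (g1 _).1, ?_, ?_⟩, ?_, ?_⟩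
  · rw [← mul_assoc, (h1 _).2.1]
  · rw [mul_assoc, (g1 _).2.2]
  · exact fun η => Fam.mul_aux (fun i => (g1 i).2.1) h2 g2 η
  · intro η
    have hxs : ∀ i, p * star (x i) = star (x i) := by
      intro i
      have := congrArg star (h1 i).2.2
      rwa [star_mul, hp.2.1.star_eq] at this
    have := Fam.mul_aux hxs g3 h3 η
    rw [mul_comm d b] at this
    have := (Equiv.prodComm κ ι).hasSum_iff.2 this
    simpa only [Function.comp_def, Equiv.prodComm_apply, star_mul, Prod.fst_swap, Prod.snd_swap] using this

theorem Fam.pow {M : VonNeumannAlgebra H} {p : H →L[ℂ] H} {a b : ℝ} (hp : IsProjIn M p) (h : Fam M p a b) (n : ℕ) :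
    Fam M p (a ^ (n + 1)) (b ^ (n + 1)) := by
  induction n with
  | zero => simpa using h
  | succ n ih => rw [pow_succ a, pow_succ b]; exact ih.mul hp h

theorem hasSum_re_inner {ι : Type*} {x : ι → H →L[ℂ] H} {k : H →L[ℂ] H}
    (h : ∀ ξ, HasSum (fun i => (star (x i) * x i) ξ) (k ξ)) (ξ : H) :
    HasSum (fun i => ‖x i ξ‖ ^ 2) (RCLike.re (inner ℂ (k ξ) ξ)) := by
  simp only [nsq]
  have h1 := (h ξ).mapL (innerSL ℂ ξ)
  have h2 := RCLike.hasSum_re ℂ h1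
  simp only [innerSL_apply_apply] at h2
  convert h2 using 1
  · ext i; rw [← inner_conj_symm, RCLike.conj_re]
  · rw [← inner_conj_symm, RCLike.conj_re]

theorem fam_of_kp {M : VonNeumannAlgebra H} {p : H →L[ℂ] H} {c : ℝ} (hp : IsProjIn M p)
    (h : KPEquiv M p ((c : ℂ) • p)) : Fam M p 1 c := by
  obtain ⟨ι, x, h1, h2, h3⟩ := h
  have k1 : ∀ η, HasSum (fun i => ‖x i η‖ ^ 2) (1 * ‖p η‖ ^ 2) := by
    intro η
    rw [one_mul, norm_sq_proj hp.2.1.star_eq hp.2.2]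
    exact hasSum_re_inner (by simpa only [← ContinuousLinearMap.star_eq_adjoint] using h2) η
  have k2 : ∀ η, HasSum (fun i => ‖(star (x i)) η‖ ^ 2) (c * ‖p η‖ ^ 2) := by
    intro η
    rw [norm_sq_proj hp.2.1.star_eq hp.2.2]
    have := hasSum_re_inner (x := fun i => star (x i)) (k := (c : ℂ) • p)
      (by simpa only [← ContinuousLinearMap.star_eq_adjoint, star_star] using h3) η
    convert this using 1
    rw [_root_.smul_apply, inner_smul_left]
    simp
  have key : ∀ (y : ι → H →L[ℂ] H) (a : ℝ), (∀ η, HasSum (fun i => ‖y i η‖ ^ 2) (a * ‖p η‖ ^ 2)) → ∀ i, y i * p = y i := by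
    intro y a hy i
    rw [← sub_eq_zero, ← mul_one (y i), mul_assoc, ← mul_sub, one_mul]
    ext η
    have h0 := hy ((p - 1) η)
    have : p ((p - 1) η) = 0 := by
      rw [← ContinuousLinearMap.mul_apply, mul_sub, hp.2.2, mul_one, sub_self]; rfl
    rw [this, norm_zero] at h0
    have h4 := le_hasSum h0 i (fun j _ => by positivity)
    have h5 : ‖y i ((p - 1) η)‖ = 0 := by
      have := norm_nonneg (y i ((p - 1) η))
      nlinarith
    simpa using norm_eq_zero.1 h5
  refine ⟨ι, x, fun i => ⟨h1 i, ?_, key x 1 k1 i⟩, k1, k2⟩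
  have := congrArg star (key _ c k2 i)
  rwa [star_mul, star_star, hp.2.1.star_eq] at this

theorem finite_contra {M : VonNeumannAlgebra H} {p z0 : H →L[ℂ] H} (hp : IsProjIn M p) {c : ℝ} (hc : 0 < c)
    (hc1 : c ≠ 1) (hkp : KPEquiv M p ((c : ℂ) • p)) (hz0 : IsCentralProj M z0) (h0 : z0 * p ≠ 0)
    (hfin : ∀ e, IsProjIn M e → e ≠ 0 → e * (z0 * p) = e → ∀ S, Copies M (z0 * p) e S → S.Finite) : False := by
  have hP := central_proj_mul hz0 hp
  obtain ⟨ξ, R, e0, f0, w0, hR, hRP, hfaith, heR, hw0, hw1, hw2, hw3, hw4, he0, hy⟩ := vec_compare hP h0 hfin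
  have he' := initProj hw0 hw1
  have hwR : w0 * R = w0 := by rw [← hw3, mul_assoc, heR]
  have hwP : w0 * (z0 * p) = w0 := by rw [← hwR, mul_assoc, hRP]
  have he'0 : star w0 * w0 ≠ 0 := fun h => hw2 (star_mul_self_zero h)
  have he'P : star w0 * w0 * (z0 * p) = star w0 * w0 := by rw [mul_assoc, hwP]
  obtain ⟨z, S, a, hz, hze, -, ⟨s0, hs0⟩, hCS, ha, ho, hae, hpi, hsum⟩ := copies M hP he' he'0 he'P ∅
    ⟨by simp, by simp⟩
  have hSfin := hfin _ he' he'0 he'P S hCS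
  have : Fintype S := hSfin.fintype
  have haP := a_mul_P hP hpi ho hsum
  have hPa : ∀ j, (z0 * p) * star (a j) = star (a j) := by
    intro j
    have := congrArg star (haP j)
    rwa [star_mul, hP.2.1.star_eq] at this
  have hz0a : ∀ j, z0 * star (a j) = star (a j) := fun j => by
    rw [← hPa j, ← mul_assoc, ← mul_assoc, hz0.1.2.2]
  have hpa : ∀ j, p * star (a j) = star (a j) := fun j => by
    rw [← hPa j, ← mul_assoc, hz0.2 p hp.1, ← mul_assoc, hp.2.2]
  have hza : ∀ j, z * star (a j) = star (a j) := fun j => by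
    have := congrArg star (ha j).2.2
    rwa [star_mul, hz.1.2.1.star_eq, ← hz.2 _ (star_mem (ha j).1)] at this
  have hae0 : ∀ j, star (a j) * e0 = star (a j) := fun j => by
    have := congrArg star (ha j).2.1
    rw [star_mul, he'.2.1.star_eq] at this
    rw [← this, mul_assoc, mul_assoc, hw3]
  have hcp := central_proj_mul hz hP
  have hnorm : ∀ ζ, ∑ j, ‖a j ζ‖ ^ 2 = ‖(z * (z0 * p)) ζ‖ ^ 2 := by
    intro ζ
    rw [norm_sq_proj hcp.2.1.star_eq hcp.2.2]
    exact (hasSum_fintype _).unique (hasSum_re_inner hsum ζ)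
  have hzx : ∀ x ∈ M, p * x = x → ∀ j, (z * (z0 * p)) * (x * star (a j)) = x * star (a j) := by
    intro x hx hpx j
    rw [mul_assoc z, mul_assoc z0, ← mul_assoc p, hpx, ← mul_assoc z0, hz0.2 x hx, mul_assoc x, hz0a,
      ← mul_assoc, hz.2 x hx, mul_assoc, hza]
  have key : ∀ x ∈ M, p * x = x → x * p = x →
      ∑ j, ‖x ((star (a j)) ξ)‖ ^ 2 ≤ ∑ k, ‖(star x) ((star (a k)) ((star w0) ξ))‖ ^ 2 := by
    intro x hx hpx hxp
    have hpx' : p * star x = star x := by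
      have := congrArg star hxp
      rwa [star_mul, hp.2.1.star_eq] at this
    have e1 : ∀ j, ‖x ((star (a j)) ξ)‖ ^ 2 = ∑ k, ‖(w0 * a k * x * star (a j)) ξ‖ ^ 2 := by
      intro j
      have h1 : x ((star (a j)) ξ) = (z * (z0 * p)) (x ((star (a j)) ξ)) := by
        have := congrArg (fun f => f ξ) (hzx x hx hpx j)
        exact this.symm
      rw [h1, ← hnorm]
      refine Finset.sum_congr rfl fun k _ => ?_
      congr 1
      refine norm_le_iff_test (a := a k * x * star (a j)) (b := w0 * a k * x * star (a j)) ?_ ξ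
      rw [mul_assoc w0, mul_assoc w0, star_mul w0, mul_assoc (star _) (star w0), ← mul_assoc (star w0) w0,
        mul_assoc (a k), ← mul_assoc (star w0 * w0), (ha k).2.1]
    have e2 : ∀ k, ‖(star x) ((star (a k)) ((star w0) ξ))‖ ^ 2 = ∑ j, ‖(star (w0 * a k * x * star (a j))) ξ‖ ^ 2 := by
      intro k
      have h1 : (star x) ((star (a k)) ((star w0) ξ)) = (z * (z0 * p)) ((star x) ((star (a k)) ((star w0) ξ))) := by
        have := congrArg (fun f => f ((star w0) ξ)) (hzx (star x) (star_mem hx) hpx' k)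
        exact this.symm
      rw [h1, ← hnorm]
      refine Finset.sum_congr rfl fun j _ => ?_
      rw [star_mul, star_star, star_mul, star_mul]
      rfl
    simp only [e1, e2]
    rw [Finset.sum_comm]
    refine Finset.sum_le_sum fun k _ => Finset.sum_le_sum fun j _ => ?_
    have := hy (w0 * a k * x * star (a j))
      (mul_mem (mul_mem (mul_mem hw0 (ha k).1) hx) (star_mem (ha j).1)) (by rw [mul_assoc, hae0])
      (by rw [← mul_assoc, ← mul_assoc, ← mul_assoc, hw4])
    gcongr
  set Ω := ∑ j, ‖(star (a j)) ξ‖ ^ 2 with hΩ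
  set Ψ := ∑ k, ‖(star (a k)) ((star w0) ξ)‖ ^ 2 with hΨ
  have hfam : ∀ α β : ℝ, Fam M p α β → α * Ω ≤ β * Ψ := by
    rintro α β ⟨ι, x, h1, h2, h3⟩
    have g1 : HasSum (fun i => ∑ j, ‖x i ((star (a j)) ξ)‖ ^ 2) (α * Ω) := by
      rw [hΩ, Finset.mul_sum]
      refine hasSum_sum fun j _ => ?_
      have := h2 ((star (a j)) ξ)
      rwa [← ContinuousLinearMap.mul_apply p, hpa] at this
    have g2 : HasSum (fun i => ∑ k, ‖(star (x i)) ((star (a k)) ((star w0) ξ))‖ ^ 2) (β * Ψ) := by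
      rw [hΨ, Finset.mul_sum]
      refine hasSum_sum fun k _ => ?_
      have := h3 ((star (a k)) ((star w0) ξ))
      rwa [← ContinuousLinearMap.mul_apply p, hpa] at this
    exact hasSum_le (fun i => key (x i) (h1 i).1 (h1 i).2.1 (h1 i).2.2) g1 g2
  have hΩpos : 0 < Ω := by
    have hle : ‖(star (a (Sum.inl ⟨s0, hs0⟩))) ξ‖ ^ 2 ≤ Ω :=
      Finset.single_le_sum (f := fun j => ‖(star (a j)) ξ‖ ^ 2) (fun _ _ => by positivity) (Finset.mem_univ _)
    refine lt_of_lt_of_le ?_ hle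
    refine pow_pos (norm_pos_iff.2 fun h => ?_) 2
    have h1 := hfaith _ (star_mem (ha _).1) h
    apply hze
    have h2 : z * (star w0 * w0) * R = z * (star w0 * w0) := by rw [mul_assoc, mul_assoc, hwR]
    rw [← h2, ← hae ⟨s0, hs0⟩, mul_assoc, h1, mul_zero]
  have hF := fam_of_kp hp hkp
  rcases lt_or_gt_of_ne hc1 with hlt | hgt
  · have h1 : ∀ n : ℕ, Ω ≤ c ^ (n + 1) * Ψ := fun n => by
      simpa using hfam _ _ (hF.pow hp n)
    have h2 : Tendsto (fun n : ℕ => c ^ (n + 1) * Ψ) atTop (𝓝 (0 * Ψ)) :=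
      ((tendsto_pow_atTop_nhds_zero_of_lt_one hc.le hlt).comp (tendsto_add_atTop_nat 1)).mul_const Ψ
    have := ge_of_tendsto' h2 h1
    linarith
  · have h1 : ∀ n : ℕ, Ω ≤ (c⁻¹) ^ (n + 1) * Ψ := fun n => by
      have := hfam _ _ ((hF.symm hp).pow hp n)
      rw [one_pow, one_mul] at this
      rw [inv_pow, inv_mul_eq_div, le_div_iff₀ (by positivity)]
      linarith
    have h2 : Tendsto (fun n : ℕ => (c⁻¹) ^ (n + 1) * Ψ) atTop (𝓝 (0 * Ψ)) :=
      ((tendsto_pow_atTop_nhds_zero_of_lt_one (inv_pos.2 hc).le (inv_lt_one_of_one_lt₀ hgt)).comp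
        (tendsto_add_atTop_nat 1)).mul_const Ψ
    have := ge_of_tendsto' h2 h1
    linarith


theorem dbl_local {M : VonNeumannAlgebra H} {p : H →L[ℂ] H} (hp : IsProjIn M p) {c : ℝ} (hc : 0 < c)
    (hc1 : c ≠ 1) (hkp : KPEquiv M p ((c : ℂ) • p)) (z0 : H →L[ℂ] H) (hz0 : IsCentralProj M z0) (h0 : z0 ≠ 0) :
    ∃ w, IsCentralProj M w ∧ w * z0 = w ∧ Dbl M p w ∧ w ≠ 0 := by
  by_contra hcon
  push Not at hcon
  have hd := finite_of_no_dbl hp hz0 hcon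
  by_cases hzp : z0 * p = 0
  · exact h0 (hcon z0 hz0 hz0.1.2.2 ⟨0, zero_mem M, 0, zero_mem M, by simp [hzp], by simp [hzp], by simp, by simp,
      by simp⟩)
  · exact finite_contra hp hc hc1 hkp hz0 hzp hd

theorem glue_fam {M : VonNeumannAlgebra H} {p : H →L[ℂ] H} (hp : IsProjIn M p)
    {S : Set (H →L[ℂ] H)} (hS : ∀ w ∈ S, IsCentralProj M w) (hF : PIFam M (fun v : S => (v : H →L[ℂ] H)))
    (hV : ∀ ξ, HasSum (fun v : S => (v : H →L[ℂ] H) ξ) ((1 : H →L[ℂ] H) ξ))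
    (s : S → H →L[ℂ] H) (hs : ∀ w, s w ∈ M ∧ star (s w) * s w = w * p ∧ p * s w = s w) :
    (∃ T, IsPISum M s T ∧ star T * T = p ∧ p * T = T) ∧ (∀ w, w * s w = s w) := by
  have h1 : ∀ w : S, s w * (w * p) = s w := by
    intro w
    have hwp := central_proj_mul (hS w w.2) hp
    have := coiso (v := star (s w)) hwp.2.1.star_eq hwp.2.2 (by rw [star_star, (hs w).2.1])
    have := congrArg star this
    rwa [star_mul, star_star, hwp.2.1.star_eq] at this
  have h2 : ∀ w : S, w * s w = s w := by
    intro w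
    have hw := hS w w.2
    rw [← h1 w, ← mul_assoc, ← mul_assoc, hw.2 _ (hs w).1, mul_assoc (s w), hw.1.2.2, mul_assoc]
  have h3 : ∀ w : S, s w * w = s w := fun w => by rw [← (hS w w.2).2 _ (hs w).1, h2]
  have hw0 : ∀ v w : S, v ≠ w → (v : H →L[ℂ] H) * w = 0 := by
    intro v w h
    have := hF.2.2.1 v w h
    simp only at this
    rwa [(hS v v.2).1.2.1.star_eq] at this
  have hsw : ∀ w : S, star (s w) * w = star (s w) := by
    intro w
    have := congrArg star (h2 w)
    rwa [star_mul, (hS w w.2).1.2.1.star_eq] at this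
  have hws : ∀ w : S, w * star (s w) = star (s w) := by
    intro w
    have := congrArg star (h3 w)
    rwa [star_mul, (hS w w.2).1.2.1.star_eq] at this
  have hP : PIFam M s := by
    refine ⟨fun w => (hs w).1, fun w => ?_, fun v w h => ?_, fun v w h => ?_⟩
    · rw [mul_assoc, (hs w).2.1, h1]
    · rw [← hsw v, ← h2 w, mul_assoc, ← mul_assoc (v : H →L[ℂ] H), hw0 v w h, zero_mul, mul_zero]
    · rw [← h3 v, ← hws w, mul_assoc, ← mul_assoc (v : H →L[ℂ] H), hw0 v w h, zero_mul, mul_zero]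
  obtain ⟨T, hT⟩ := hP.sum
  refine ⟨⟨T, hT, ?_, hT.mul_l fun w => (hs w).2.2⟩, h2⟩
  refine hasSum_uniq hT.hss ?_
  have := hasSum_mul_right hV p
  rw [one_mul] at this
  simpa only [(hs _).2.1] using this

theorem dbl_global {M : VonNeumannAlgebra H} {p : H →L[ℂ] H} (hp : IsProjIn M p) {c : ℝ} (hc : 0 < c)
    (hc1 : c ≠ 1) (hkp : KPEquiv M p ((c : ℂ) • p)) : Dbl M p 1 := by
  obtain ⟨S, V, hF, hS, hV, hmax⟩ := pi_zorn M (fun v => IsCentralProj M v ∧ Dbl M p v) 1 1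
  have hst : star V = V := by
    refine hasSum_uniq hV.hs' ?_
    have : ∀ v : S, star (v : H →L[ℂ] H) = v := fun v => (hS v v.2).1.1.1.2.1.star_eq
    simpa only [this] using hV.hs
  have hVV : star V * V = V := by
    refine hasSum_uniq hV.hss ?_
    have : ∀ v : S, star (v : H →L[ℂ] H) * v = v := fun v => by
      rw [(hS v v.2).1.1.1.2.1.star_eq, (hS v v.2).1.1.1.2.2]
    simpa only [this] using hV.hs
  have hVc : IsCentralProj M V := by
    refine ⟨⟨hV.mem, hst, by nth_rw 1 [← hst]; exact hVV⟩, fun x hx => ?_⟩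
    refine hasSum_uniq (hasSum_mul_right hV.hs x) ?_
    have : ∀ v : S, (v : H →L[ℂ] H) * x = x * v := fun v => (hS v v.2).1.1.2 x hx
    simpa only [this] using hasSum_mul_left hV.hs x
  have hV1 : V = 1 := by
    by_contra hne
    obtain ⟨w, hw, hw1, hw2, hw3⟩ := dbl_local hp hc hc1 hkp (1 - V) (compl_central hVc)
      (fun h => hne (sub_eq_zero.1 h).symm)
    have hwV : w * V = 0 := by
      rw [mul_sub, mul_one, sub_eq_self] at hw1; exact hw1
    refine hw3 (hmax w hw.1.1 (by rw [hw.1.2.1.star_eq, hw.1.2.2, hw.1.2.2]) ⟨hw, hw2⟩ (mul_one _) (one_mul _)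
      (by rw [hst, hwV]) (by rw [hw.1.2.1.star_eq, hwV]))
  have hVs := hV.hs
  rw [hV1] at hVs
  choose s hs t ht a1 a2 a3 a4 a5 using fun w : S => (hS w w.2).1.2
  obtain ⟨⟨s', hs', b1, b2⟩, b3⟩ := glue_fam hp (fun w hw => (hS w hw).1.1) hF hVs s (fun w => ⟨hs w, a1 w, a4 w⟩)
  obtain ⟨⟨t', ht', c1, c2⟩, c3⟩ := glue_fam hp (fun w hw => (hS w hw).1.1) hF hVs t (fun w => ⟨ht w, a2 w, a5 w⟩)
  refine ⟨s', hs'.mem, t', ht'.mem, by rw [one_mul, b1], by rw [one_mul, c1], ?_, b2, c2⟩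
  have key : ∀ v w : S, star (s v) * t w = 0 := by
    intro v w
    by_cases h : v = w
    · rw [h, a3]
    · have h1 := congrArg star (b3 v)
      have h2 := hF.2.2.1 v w h
      simp only at h2
      rw [star_mul] at h1
      rw [← h1, ← c3 w, mul_assoc, ← mul_assoc _ (w : H →L[ℂ] H), h2, zero_mul, mul_zero]
  have k2 : ∀ w : S, star s' * t w = 0 := by
    intro w
    refine hasSum_uniq (hasSum_mul_right hs'.hs' (t w)) fun ξ => ?_
    simp only [key]
    simpa using hasSum_zero
  refine hasSum_uniq (hasSum_mul_left ht'.hs (star s')) fun ξ => ?_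
  simp only [k2]
  simpa using hasSum_zero

theorem hotel {M : VonNeumannAlgebra H} {p : H →L[ℂ] H} (hp : IsProjIn M p) (hne : p ≠ 0) (hD : Dbl M p 1) :
    ProperlyInfiniteProj M p := by
  obtain ⟨s0, hs0, t, ht, hss, htt, hst, hps, hpt⟩ := hD
  rw [one_mul] at hss htt
  have hpn : ∀ n x, p * x = x → p * (t ^ n * x) = t ^ n * x := by
    intro n x hx
    cases n with
    | zero => simpa using hx
    | succ n => rw [pow_succ', mul_assoc, ← mul_assoc, hpt]
  have htn : ∀ n x, p * x = x → star t ^ n * (t ^ n * x) = x := by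
    intro n
    induction n with
    | zero => intro x _; simp
    | succ n ih =>
      intro x hx
      rw [pow_succ (star t), pow_succ' t, mul_assoc, mul_assoc, ← mul_assoc (star t), htt, hpn n x hx, ih x hx]
  have hpst := hp.2.1.star_eq
  obtain ⟨s, hs⟩ : ∃ s : ℕ → H →L[ℂ] H, ∀ n, s n = t ^ n * s0 := ⟨_, fun _ => rfl⟩
  have hsM : ∀ n, s n ∈ M := fun n => by rw [hs]; exact mul_mem (pow_mem ht n) hs0
  have hpsn : ∀ n, p * s n = s n := fun n => by rw [hs]; exact hpn n s0 hps
  have hs1 : ∀ n, star (s n) * s n = p := fun n => by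
    rw [hs, star_mul, star_pow, mul_assoc, htn n s0 hps, hss]
  have hlt : ∀ m n, m < n → star (s m) * s n = 0 := by
    intro m n hmn
    obtain ⟨k, rfl⟩ := Nat.exists_eq_add_of_lt hmn
    rw [hs, hs, star_mul, star_pow, show m + k + 1 = m + (k + 1) by ring, pow_add, mul_assoc, mul_assoc,
      htn m _ (hpn _ _ hps), pow_succ', ← mul_assoc, ← mul_assoc, hst, zero_mul, zero_mul]
  have hs2 : ∀ m n, m ≠ n → star (s m) * s n = 0 := by
    intro m n h
    rcases lt_or_gt_of_ne h with h | h
    · exact hlt m n h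
    · have := congrArg star (hlt n m h)
      simpa using this
  have hsp : ∀ n, s n * p = s n := by
    intro n
    have := coiso (v := star (s n)) hpst hp.2.2 (by rw [star_star, hs1])
    have := congrArg star this
    rwa [star_mul, star_star, hpst] at this
  have hpss : ∀ n, p * star (s n) = star (s n) := by
    intro n
    have := congrArg star (hsp n)
    rwa [star_mul, hpst] at this
  have hfam : ∀ q, IsProjIn M q → p * q = q → PIFam M (fun n => s n * q * star (s n)) := by
    intro q hq hpq
    have hst' : ∀ n, star (s n * q * star (s n)) = s n * q * star (s n) := by
      intro n; rw [star_mul, star_mul, star_star, hq.2.1.star_eq, mul_assoc]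
    have hid : ∀ n, s n * q * star (s n) * (s n * q * star (s n)) = s n * q * star (s n) := by
      intro n
      rw [mul_assoc (s n * q), ← mul_assoc (star (s n)), ← mul_assoc (star (s n)), hs1, hpq, mul_assoc (s n) q,
        ← mul_assoc q q, hq.2.2, mul_assoc]
    have hor : ∀ m n, m ≠ n → s m * q * star (s m) * (s n * q * star (s n)) = 0 := by
      intro m n h
      rw [mul_assoc (s m * q), ← mul_assoc (star (s m)), ← mul_assoc (star (s m)), hs2 m n h]; simp
    refine ⟨fun n => mul_mem (mul_mem (hsM n) hq.1) (star_mem (hsM n)), fun n => ?_, fun m n h => ?_, fun m n h => ?_⟩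
    · simp only [hst', hid]
    · simp only [hst']; exact hor m n h
    · simp only [hst']; exact hor m n h
  obtain ⟨F, hF⟩ := (hfam p hp hp.2.2).sum
  have hFh : ∀ ξ, HasSum (fun n => (s n * star (s n)) ξ) (F ξ) := by
    simpa only [hsp] using hF.hs
  have hFs : star F = F := by
    refine hasSum_uniq hF.hs' ?_
    simpa only [hsp, star_mul, star_star, hpss, hpst] using hFh
  have hFsn : ∀ n, F * s n = s n := by
    intro n
    have := hasSum_op_single (hasSum_mul_right hFh (s n)) n (by
      intro j hj
      rw [mul_assoc, hs2 j n hj, mul_zero])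
    rw [this, mul_assoc, hs1, hsp]
  have hFF : F * F = F := by
    refine hasSum_uniq (hasSum_mul_left hFh F) ?_
    simpa only [← mul_assoc, hFsn] using hFh
  have hFp : IsProjIn M F := ⟨hF.mem, hFs, hFF⟩
  have hFP : F * p = F := hF.mul_r fun n => by
    have : star (s n) * p = star (s n) := by
      have := congrArg star (hpsn n)
      rwa [star_mul, hpst] at this
    rw [mul_assoc, this]
  have hPF : p * F = F := le_symm hp hFp hFP
  obtain ⟨r, hr_def⟩ : ∃ r, r = p - F := ⟨_, rfl⟩
  have hr : IsProjIn M r := hr_def ▸ subProj hp hFp hFP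
  have hrst := hr.2.1.star_eq
  have hrs : ∀ n, r * s n = 0 := fun n => by rw [hr_def, sub_mul, hpsn, hFsn, sub_self]
  have hsr : ∀ n, star (s n) * r = 0 := by
    intro n
    have := congrArg star (hrs n)
    rwa [star_mul, hrst, star_zero] at this
  have hFr : F * r = 0 := by rw [hr_def, mul_sub, hFP, hFF, sub_self]
  have hrF : r * F = 0 := by rw [hr_def, sub_mul, hPF, hFF, sub_self]
  have hpr : p * r = r := by rw [hr_def, mul_sub, hp.2.2, hPF]
  have hrp : r * p = r := by rw [hr_def, sub_mul, hp.2.2, hFP]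
  obtain ⟨a, ha0, ha1⟩ : ∃ a : ℕ → H →L[ℂ] H, a 0 = p ∧ ∀ n, a (n + 1) = s n :=
    ⟨fun n => Nat.casesOn n p s, rfl, fun _ => rfl⟩
  have haM : ∀ n, a n ∈ M := by
    intro n; cases n with
    | zero => rw [ha0]; exact hp.1
    | succ n => rw [ha1]; exact hsM n
  have X : ∀ m n, F * (star (s m) * (a n * r)) = 0 := by
    intro m n
    cases n with
    | zero => rw [ha0, hpr, hsr, mul_zero]
    | succ n =>
      rw [ha1, ← mul_assoc (star (s m))]
      by_cases h : m = n
      · rw [h, hs1, hpr, hFr]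
      · rw [hs2 m n h, zero_mul, mul_zero]
  have X' : ∀ m n, r * (star (a m) * (s n * F)) = 0 := by
    intro m n
    have := congrArg star (X n m)
    simpa only [star_mul, star_star, hrst, hFs, star_zero, mul_assoc] using this
  have Y1 : ∀ n, r * (star (a n) * (a n * r)) = r := by
    intro n
    cases n with
    | zero => rw [ha0, hpst, hpr, hpr, hr.2.2]
    | succ n => rw [ha1, ← mul_assoc (star (s n)), hs1, hpr, hr.2.2]
  have Y2 : ∀ m n, m ≠ n → r * (star (a m) * (a n * r)) = 0 := by
    intro m n h
    cases m with
    | zero =>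
      cases n with
      | zero => exact absurd rfl h
      | succ n => rw [ha0, ha1, hpst, ← mul_assoc, hrp, ← mul_assoc, hrs, zero_mul]
    | succ m =>
      cases n with
      | zero => rw [ha0, ha1, hpr, hsr, mul_zero]
      | succ n => rw [ha1, ha1, ← mul_assoc (star (s m)), hs2 m n (fun h' => h (by rw [h'])), zero_mul, mul_zero]
  obtain ⟨y, hy⟩ : ∃ y : ℕ → H →L[ℂ] H, ∀ n, y n = s n * F + a n * r := ⟨_, fun _ => rfl⟩
  have hyst : ∀ n, star (y n) = F * star (s n) + r * star (a n) := fun n => by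
    rw [hy, star_add, star_mul, star_mul, hFs, hrst]
  have hyM : ∀ n, y n ∈ M := fun n => by
    rw [hy]; exact add_mem (mul_mem (hsM n) hF.mem) (mul_mem (haM n) hr.1)
  have hexp : ∀ m n, star (y m) * y n = F * (star (s m) * s n) * F + r * (star (a m) * (a n * r)) := by
    intro m n
    rw [hyst, hy, add_mul, mul_add, mul_add, mul_assoc F _ (a n * r), X, mul_assoc r, X', mul_assoc r]
    simp only [mul_assoc, add_zero, zero_add]
  have hyy : ∀ n, star (y n) * y n = p := by
    intro n
    rw [hexp, hs1, Y1, hFP, hFF, hr_def]; abel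
  have hyo : ∀ m n, m ≠ n → star (y m) * y n = 0 := by
    intro m n h
    rw [hexp, hs2 m n h, Y2 m n h]; simp
  have hyp : ∀ n, y n * p = y n := by
    intro n
    rw [hy, add_mul, mul_assoc, hFP, mul_assoc, hrp]
  have hypi : ∀ n, y n * star (y n) * y n = y n := fun n => by rw [mul_assoc, hyy, hyp]
  have hey : ∀ n, y n * star (y n) = s n * star (s n) - s n * r * star (s n) + a n * r * star (a n) := by
    intro n
    have h1 : F = p - r := by rw [hr_def]; abel
    have c1 : s n * F * (F * star (s n)) = s n * star (s n) - s n * r * star (s n) := by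
      rw [mul_assoc, ← mul_assoc F, hFF, h1, sub_mul, hpss, mul_sub, mul_assoc]
    have c2 : s n * F * (r * star (a n)) = 0 := by
      rw [mul_assoc, ← mul_assoc F, hFr, zero_mul, mul_zero]
    have c3 : a n * r * (F * star (s n)) = 0 := by
      rw [mul_assoc, ← mul_assoc r, hrF, zero_mul, mul_zero]
    have c4 : a n * r * (r * star (a n)) = a n * r * star (a n) := by
      rw [mul_assoc, ← mul_assoc r, hr.2.2, mul_assoc]
    rw [hyst, hy, add_mul, mul_add, mul_add, c1, c2, c3, c4, add_zero, zero_add]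
  obtain ⟨G, hG⟩ := (hfam r hr hpr).sum
  refine ⟨hne, fun n => y n * star (y n), fun n => finalProj (hyM n) (hypi n), ?_, ?_, ?_⟩
  · intro m n h
    simp only
    rw [mul_assoc, ← mul_assoc (star (y m)), hyo m n h, zero_mul, mul_zero]
  · intro n
    refine ⟨star (y n), star_mem (hyM n), ?_, ?_⟩
    · rw [← ContinuousLinearMap.star_eq_adjoint, star_star]
    · rw [← ContinuousLinearMap.star_eq_adjoint, star_star, hyy]
  · intro ξ
    have d1 : HasSum (fun n => (a n * r * star (a n)) ξ) (G ξ + r ξ) := by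
      have := (hasSum_nat_add_iff (f := fun n => (a n * r * star (a n)) ξ) 1).1 (by
        simpa only [ha1] using hG.hs ξ)
      simpa only [Finset.sum_range_one, ha0, hpst, hpr, hrp] using this
    have d2 := ((hFh ξ).sub (hG.hs ξ)).add d1
    have d3 : F ξ - G ξ + (G ξ + r ξ) = p ξ := by
      rw [hr_def, _root_.sub_apply]; abel
    rw [d3] at d2
    simp only [hey]
    exact d2


theorem wsum {M : VonNeumannAlgebra H} {p : H →L[ℂ] H} (hp : IsProjIn M p) {e : ℕ → H →L[ℂ] H}
    (he : ∀ n, IsProjIn M (e n)) (hsum : ∀ ξ, HasSum (fun n => e n ξ) (p ξ)) {a : ℕ → ℕ → ℝ} {d : ℝ}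
    (ha0 : ∀ n m, 0 ≤ a n m) (hd : ∀ n, HasSum (a n) d) {x : ℕ × ℕ → H →L[ℂ] H}
    (hx : ∀ n m, star (x (n, m)) * x (n, m) = (a n m : ℂ) • e n) (ξ : H) :
    HasSum (fun i => (star (x i) * x i) ξ) (((d : ℂ) • p) ξ) := by
  have hn : ∀ n m η, ‖x (n, m) η‖ ^ 2 = ‖e n η‖ ^ 2 * a n m := by
    intro n m η
    rw [nsq, hx, norm_sq_proj (he n).2.1.star_eq (he n).2.2, _root_.smul_apply, inner_smul_left]
    simp [mul_comm]
  have h1 : ∀ η, HasSum (fun n => ‖e n η‖ ^ 2) (‖p η‖ ^ 2) := by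
    intro η
    rw [norm_sq_proj hp.2.1.star_eq hp.2.2]
    refine hasSum_re_inner ?_ η
    simpa only [(he _).2.1.star_eq, (he _).2.2] using hsum
  have h2 : ∀ η, HasSum (fun i => ‖x i η‖ ^ 2) (‖p η‖ ^ 2 * d) := by
    intro η
    refine hasSum_prod_nonneg (g := fun n => ‖e n η‖ ^ 2 * d) (fun _ => by positivity) (fun n => ?_) ((h1 η).mul_right d)
    simp only [hn]
    exact (hd n).mul_left _
  have hd0 : 0 ≤ d := (hd 0).nonneg fun m => ha0 0 m
  have h3 := summable_pair x x d (by
    intro η F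
    have := sum_le_hasSum F (fun i _ => by positivity) (h2 η)
    refine this.trans ?_
    rw [mul_comm]
    have := norm_proj_le hp.2.1.star_eq hp.2.2 η
    gcongr) ξ (h2 ξ).summable
  have h4 : HasSum (fun i => (star (x i) * x i) ξ) _ := h3.hasSum
  have h5 := h4.prod_fiberwise (g := fun n => (d : ℂ) • e n ξ) (by
    intro n
    simp only [hx]
    have : HasSum (fun m => ((a n m : ℝ) : ℂ)) (d : ℂ) := by exact_mod_cast hd n
    exact this.smul_const (e n ξ))
  have h6 : HasSum (fun n => (d : ℂ) • e n ξ) ((d : ℂ) • p ξ) := (hsum ξ).const_smul _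
  rw [h5.unique h6] at h4
  exact h4

theorem overlap (t : ℝ) (ht : 0 < t) (A : Set ℝ) (hA : MeasurableSet A) (hA0 : ∀ x ∈ A, 0 ≤ x)
    (hf : MeasureTheory.volume A ≠ ⊤) :
    HasSum (fun k : ℕ => (MeasureTheory.volume (A ∩ Set.Ico (t * k) (t * (k + 1)))).toReal)
      (MeasureTheory.volume A).toReal := by
  have hU : A = ⋃ k : ℕ, A ∩ Set.Ico (t * k) (t * (k + 1)) := by
    ext x
    simp only [Set.mem_iUnion, Set.mem_inter_iff, Set.mem_Ico, exists_and_left, iff_self_and]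
    intro hx
    refine ⟨⌊x / t⌋₊, ?_, ?_⟩
    · have := Nat.floor_le (a := x / t) (div_nonneg (hA0 x hx) ht.le)
      rw [le_div_iff₀ ht] at this; linarith
    · have := Nat.lt_floor_add_one (x / t)
      rw [div_lt_iff₀ ht] at this; linarith
  have hm : MeasureTheory.volume A = ∑' k : ℕ, MeasureTheory.volume (A ∩ Set.Ico (t * k) (t * (k + 1))) := by
    conv_lhs => rw [hU]
    refine MeasureTheory.measure_iUnion ?_ fun k => hA.inter measurableSet_Ico
    have key : ∀ i j : ℕ, i < j → Disjoint (A ∩ Set.Ico (t * i) (t * (i + 1))) (A ∩ Set.Ico (t * j) (t * (j + 1))) := by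
      intro i j hij
      rw [Set.disjoint_left]
      rintro x ⟨-, -, h1⟩ ⟨-, h2, -⟩
      have : (i : ℝ) + 1 ≤ j := by exact_mod_cast hij
      nlinarith
    intro i j hij
    rcases lt_or_gt_of_ne hij with h | h
    · exact key i j h
    · exact (key j i h).symm
  rw [hm, ENNReal.tsum_toReal_eq (fun k => ne_top_of_le_ne_top hf (MeasureTheory.measure_mono Set.inter_subset_left))]
  exact ENNReal.hasSum_toReal (hm ▸ hf)

theorem matrix_exists (c : ℝ) (hc : 0 < c) : ∃ a : ℕ → ℕ → ℝ, (∀ n m, 0 ≤ a n m) ∧ (∀ n, HasSum (a n) 1) ∧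
    ∀ m, HasSum (fun n => a n m) c := by
  refine ⟨fun n m => (MeasureTheory.volume (Set.Ico ((1 : ℝ) * n) (1 * (n + 1)) ∩ Set.Ico (c * m) (c * (m + 1)))).toReal,
    fun n m => ENNReal.toReal_nonneg, fun n => ?_, fun m => ?_⟩
  · have := overlap c hc (Set.Ico ((1 : ℝ) * n) (1 * (n + 1))) measurableSet_Ico
      (fun x hx => le_trans (by positivity) hx.1) (by simp)
    convert this using 1
    rw [Real.volume_Ico, ENNReal.toReal_ofReal] <;> linarith
  · have := overlap 1 one_pos (Set.Ico (c * m) (c * (m + 1))) measurableSet_Ico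
      (fun x hx => le_trans (by positivity) hx.1) (by simp)
    convert this using 1
    · ext n; rw [Set.inter_comm]
    · rw [Real.volume_Ico, ENNReal.toReal_ofReal] <;> nlinarith

theorem forward {M : VonNeumannAlgebra H} {p : H →L[ℂ] H} (hp : IsProjIn M p) (h : ProperlyInfiniteProj M p)
    (c : ℝ) (hc : 0 < c) : KPEquiv M p ((c : ℂ) • p) := by
  obtain ⟨-, e, he, -, hv, hsum⟩ := h
  choose v hvM hv1 hv2 using hv
  simp only [← ContinuousLinearMap.star_eq_adjoint] at hv1 hv2
  have hpv : ∀ n, p * v n = v n := fun n => coiso hp.2.1.star_eq hp.2.2 (hv2 n)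
  obtain ⟨a, ha0, ha1, ha2⟩ := matrix_exists c hc
  have hsq : ∀ n m, ((Real.sqrt (a n m) : ℝ) : ℂ) * ((Real.sqrt (a n m) : ℝ) : ℂ) = (a n m : ℂ) := by
    intro n m
    rw [← Complex.ofReal_mul, Real.mul_self_sqrt (ha0 n m)]
  let x : ℕ × ℕ → H →L[ℂ] H := fun i => ((Real.sqrt (a i.1 i.2) : ℝ) : ℂ) • (star (v i.2) * v i.1)
  have hgen : ∀ (r : ℝ) (n m : ℕ), star (((r : ℝ) : ℂ) • (star (v m) * v n)) = ((r : ℝ) : ℂ) • (star (v n) * v m) := by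
    intro r n m
    rw [star_smul, star_mul, star_star]
    simp
  have hprod : ∀ n m, star (v n) * v m * (star (v m) * v n) = e n := by
    intro n m
    rw [mul_assoc, ← mul_assoc (v m), hv2, hpv, hv1]
  have hx1 : ∀ n m, star (x (n, m)) * x (n, m) = (a n m : ℂ) • e n := by
    intro n m
    simp only [x]
    rw [hgen, smul_mul_smul_comm, hprod, hsq]
  have hx2 : ∀ n m, x (n, m) * star (x (n, m)) = (a n m : ℂ) • e m := by
    intro n m
    simp only [x]
    rw [hgen, smul_mul_smul_comm, hprod, hsq]
  refine ⟨ULift (ℕ × ℕ), fun i => x i.down, fun i => vn_smul_mem _ (mul_mem (star_mem (hvM _)) (hvM _)), ?_, ?_⟩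
  · intro ξ
    have := wsum hp he hsum ha0 ha1 hx1 ξ
    simp only [Complex.ofReal_one, one_smul] at this
    have := Equiv.ulift.{u, 0}.hasSum_iff.2 this
    simp only [← ContinuousLinearMap.star_eq_adjoint]
    exact this
  · intro ξ
    have := wsum (x := fun i => star (x (i.2, i.1))) hp he hsum (fun n m => ha0 m n) ha2
      (by intro n m; simp only [star_star]; exact hx2 m n) ξ
    have := (Equiv.ulift.{u, 0}.trans (Equiv.prodComm ℕ ℕ)).hasSum_iff.2 this
    simp only [star_star] at this
    simp only [← ContinuousLinearMap.star_eq_adjoint]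
    exact this

/-- A nonzero projection `p` is properly infinite iff `p ≈ λ p` for some
(equivalently, every) `λ ∈ (0,1) ∪ (1,∞)`. -/
theorem properlyInfinite_iff_kpEquiv_smul (M : VonNeumannAlgebra H)
    (p : H →L[ℂ] H) (hp : IsProjIn M p) (hne : p ≠ 0) :
    (ProperlyInfiniteProj M p ↔
      ∀ c : ℝ, 0 < c → c ≠ 1 → KPEquiv M p ((c : ℂ) • p)) ∧
    (ProperlyInfiniteProj M p ↔
      ∃ c : ℝ, 0 < c ∧ c ≠ 1 ∧ KPEquiv M p ((c : ℂ) • p)) := by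
  have h2 : (∃ c : ℝ, 0 < c ∧ c ≠ 1 ∧ KPEquiv M p ((c : ℂ) • p)) → ProperlyInfiniteProj M p := by
    rintro ⟨c, hc, hc1, hkp⟩
    exact hotel hp hne (dbl_global hp hc hc1 hkp)
  refine ⟨⟨fun h c hc _ => forward hp h c hc, fun h => ?_⟩, ⟨fun h => ?_, h2⟩⟩
  · exact h2 ⟨2, by norm_num, by norm_num, h 2 (by norm_num) (by norm_num)⟩
  · exact ⟨2, by norm_num, by norm_num, forward hp h 2 (by norm_num)⟩
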